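/- arXiv:1409.5184 — 2 statements merged into one kernel-verified Lean document; each statement's English description precedes it below -/
import Mathlib

section
/- Let (H,α) be a monoidal Hom-Hopf algebra with bijective antipode S and (A,β) a right (H,α)-Hom-comodule algebra, B=A^{coH}. The following are equivalent: (1) A is faithfully flat as a left (B,β|_B)-Hom-module and can: A⊗_B A→A⊗H is bijective; (2) the adjoint pair (F,G) is a pair of inverse equivalences between right (B,β|_B)-Hom-modules and right (H,A)-Hom-Hopf modules, i.e. for every right B-Hom-module (M,μ) the unit η_M:M→(M⊗_B A)^{coH}, m↦μ⁻¹(m)⊗1_A, is bijective, and for every right (H,A)-Hom-Hopf module (N,ν) the counit ε_N:N^{coH}⊗_B A→N, n⊗a↦n·a, is bijective. -/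
open TensorProduct

noncomputable section

/-- A (unital) monoidal Hom-bialgebra, following Caenepeel–Goyvaerts.
The algebra axioms are stated pointwise, the coalgebra axioms at the level of
linear maps (using the standard vector-space associator to compare the two
sides of Hom-coassociativity). -/
structure MonoidalHomBialgebra (k : Type) [Field k] (H : Type) [AddCommGroup H] [Module k H] where
  mul : H →ₗ[k] H →ₗ[k] H
  one : H
  comul : H →ₗ[k] H ⊗[k] H
  counit : H →ₗ[k] k
  aut : H ≃ₗ[k] H
  hom_assoc : ∀ a b c, mul (aut a) (mul b c) = mul (mul a b) (aut c)
  mulOne : ∀ a, mul a one = aut a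
  oneMul : ∀ a, mul one a = aut a
  aut_mul : ∀ a b, aut (mul a b) = mul (aut a) (aut b)
  aut_one : aut one = one
  coassoc :
    (TensorProduct.assoc k H H H).toLinearMap ∘ₗ
        (TensorProduct.map comul aut.symm.toLinearMap) ∘ₗ comul =
      (TensorProduct.map aut.symm.toLinearMap comul) ∘ₗ comul
  counit_left :
    (TensorProduct.lid k H).toLinearMap ∘ₗ (TensorProduct.map counit LinearMap.id) ∘ₗ comul =
      aut.symm.toLinearMap
  counit_right :
    (TensorProduct.rid k H).toLinearMap ∘ₗ (TensorProduct.map LinearMap.id counit) ∘ₗ comul =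
      aut.symm.toLinearMap
  comul_aut :
    comul ∘ₗ aut.toLinearMap = (TensorProduct.map aut.toLinearMap aut.toLinearMap) ∘ₗ comul
  counit_aut : counit ∘ₗ aut.toLinearMap = counit
  comul_mul :
    comul ∘ₗ TensorProduct.lift mul =
      (TensorProduct.map (TensorProduct.lift mul) (TensorProduct.lift mul)) ∘ₗ
        (TensorProduct.tensorTensorTensorComm k H H H H).toLinearMap ∘ₗ
          (TensorProduct.map comul comul)
  comul_one : comul one = one ⊗ₜ[k] one
  counit_mul : ∀ a b, counit (mul a b) = counit a * counit b
  counit_one : counit one = 1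

/-- A monoidal Hom-Hopf algebra: a monoidal Hom-bialgebra with an antipode. -/
structure MonoidalHomHopf (k : Type) [Field k] (H : Type) [AddCommGroup H] [Module k H]
    extends MonoidalHomBialgebra k H where
  antipode : H →ₗ[k] H
  antipode_aut : antipode ∘ₗ aut.toLinearMap = aut.toLinearMap ∘ₗ antipode
  antipode_mul_left :
    TensorProduct.lift mul ∘ₗ (TensorProduct.map antipode LinearMap.id) ∘ₗ comul =
      LinearMap.toSpanSingleton k H one ∘ₗ counit
  antipode_mul_right :
    TensorProduct.lift mul ∘ₗ (TensorProduct.map LinearMap.id antipode) ∘ₗ comul =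
      LinearMap.toSpanSingleton k H one ∘ₗ counit

variable {k : Type} [Field k] {H : Type} [AddCommGroup H] [Module k H]

/-- A right (H,α)-Hom-comodule. -/
structure HomComodule (Hb : MonoidalHomBialgebra k H) (M : Type) [AddCommGroup M] [Module k M] where
  coact : M →ₗ[k] M ⊗[k] H
  aut : M ≃ₗ[k] M
  coassoc :
    (TensorProduct.map aut.symm.toLinearMap Hb.comul) ∘ₗ coact =
      (TensorProduct.assoc k M H H).toLinearMap ∘ₗ
        (TensorProduct.map coact Hb.aut.symm.toLinearMap) ∘ₗ coact
  counit :
    (TensorProduct.rid k M).toLinearMap ∘ₗ (TensorProduct.map LinearMap.id Hb.counit) ∘ₗ coact =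
      aut.symm.toLinearMap
  coact_aut :
    coact ∘ₗ aut.toLinearMap = (TensorProduct.map aut.toLinearMap Hb.aut.toLinearMap) ∘ₗ coact

/-- A left (H,α)-Hom-comodule. -/
structure HomLeftComodule (Hb : MonoidalHomBialgebra k H) (M : Type) [AddCommGroup M] [Module k M] where
  coact : M →ₗ[k] H ⊗[k] M
  aut : M ≃ₗ[k] M
  coassoc :
    (TensorProduct.map Hb.comul aut.symm.toLinearMap) ∘ₗ coact =
      (TensorProduct.assoc k H H M).symm.toLinearMap ∘ₗ
        (TensorProduct.map Hb.aut.symm.toLinearMap coact) ∘ₗ coact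
  counit :
    (TensorProduct.lid k M).toLinearMap ∘ₗ (TensorProduct.map Hb.counit LinearMap.id) ∘ₗ coact =
      aut.symm.toLinearMap
  coact_aut :
    coact ∘ₗ aut.toLinearMap = (TensorProduct.map Hb.aut.toLinearMap aut.toLinearMap) ∘ₗ coact

/-- A right (H,α)-Hom-comodule algebra. -/
structure HomComoduleAlgebra (Hb : MonoidalHomBialgebra k H) (A : Type) [AddCommGroup A] [Module k A] where
  mul : A →ₗ[k] A →ₗ[k] A
  one : A
  aut : A ≃ₗ[k] A
  hom_assoc : ∀ a b c, mul (aut a) (mul b c) = mul (mul a b) (aut c)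
  mulOne : ∀ a, mul a one = aut a
  oneMul : ∀ a, mul one a = aut a
  aut_mul : ∀ a b, aut (mul a b) = mul (aut a) (aut b)
  aut_one : aut one = one
  coact : A →ₗ[k] A ⊗[k] H
  coassoc :
    (TensorProduct.map aut.symm.toLinearMap Hb.comul) ∘ₗ coact =
      (TensorProduct.assoc k A H H).toLinearMap ∘ₗ
        (TensorProduct.map coact Hb.aut.symm.toLinearMap) ∘ₗ coact
  counit :
    (TensorProduct.rid k A).toLinearMap ∘ₗ (TensorProduct.map LinearMap.id Hb.counit) ∘ₗ coact =
      aut.symm.toLinearMap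
  coact_aut :
    coact ∘ₗ aut.toLinearMap = (TensorProduct.map aut.toLinearMap Hb.aut.toLinearMap) ∘ₗ coact
  coact_mul :
    coact ∘ₗ TensorProduct.lift mul =
      (TensorProduct.map (TensorProduct.lift mul) (TensorProduct.lift Hb.mul)) ∘ₗ
        (TensorProduct.tensorTensorTensorComm k A H A H).toLinearMap ∘ₗ
          (TensorProduct.map coact coact)
  coact_one : coact one = one ⊗ₜ[k] Hb.one

variable {A : Type} [AddCommGroup A] [Module k A]

/-- A right (A,β)-Hom-module. -/
structure HomModule {Hb : MonoidalHomBialgebra k H} (Ac : HomComoduleAlgebra Hb A)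
    (M : Type) [AddCommGroup M] [Module k M] where
  act : M →ₗ[k] A →ₗ[k] M
  aut : M ≃ₗ[k] M
  act_act : ∀ m a b, act (act m a) (Ac.aut b) = act (aut m) (Ac.mul a b)
  act_one : ∀ m, act m Ac.one = aut m
  aut_act : ∀ m a, aut (act m a) = act (aut m) (Ac.aut a)

/-- A right Hom-module over the subalgebra of `A` carved out by `Bset`
(typically the coinvariants `B = A^{co H}`): the action is a bilinear map
`M × A → M` whose Hom-module axioms are only required on `Bset`. -/
structure HomModuleOn {Hb : MonoidalHomBialgebra k H} (Ac : HomComoduleAlgebra Hb A)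
    (Bset : Set A) (M : Type) [AddCommGroup M] [Module k M] where
  act : M →ₗ[k] A →ₗ[k] M
  aut : M ≃ₗ[k] M
  act_act : ∀ m, ∀ b ∈ Bset, ∀ b' ∈ Bset, act (act m b) (Ac.aut b') = act (aut m) (Ac.mul b b')
  act_one : ∀ m, act m Ac.one = aut m
  aut_act : ∀ m, ∀ b ∈ Bset, aut (act m b) = act (aut m) (Ac.aut b)

/-- A left Hom-module over the subalgebra of `A` carved out by `Bset`. -/
structure HomLeftModuleOn {Hb : MonoidalHomBialgebra k H} (Ac : HomComoduleAlgebra Hb A)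
    (Bset : Set A) (M : Type) [AddCommGroup M] [Module k M] where
  act : A →ₗ[k] M →ₗ[k] M
  aut : M ≃ₗ[k] M
  act_act : ∀ m, ∀ b ∈ Bset, ∀ b' ∈ Bset, act (Ac.aut b) (act b' m) = act (Ac.mul b b') (aut m)
  act_one : ∀ m, act Ac.one m = aut m
  aut_act : ∀ m, ∀ b ∈ Bset, aut (act b m) = act (Ac.aut b) (aut m)

/-- A right-right (H,A)-Hom-Hopf module (a relative Hom-Hopf module). -/
structure HomHopfModule {Hb : MonoidalHomBialgebra k H} (Ac : HomComoduleAlgebra Hb A)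
    (N : Type) [AddCommGroup N] [Module k N] where
  act : N →ₗ[k] A →ₗ[k] N
  aut : N ≃ₗ[k] N
  act_act : ∀ n a b, act (act n a) (Ac.aut b) = act (aut n) (Ac.mul a b)
  act_one : ∀ n, act n Ac.one = aut n
  aut_act : ∀ n a, aut (act n a) = act (aut n) (Ac.aut a)
  coact : N →ₗ[k] N ⊗[k] H
  coassoc :
    (TensorProduct.map aut.symm.toLinearMap Hb.comul) ∘ₗ coact =
      (TensorProduct.assoc k N H H).toLinearMap ∘ₗ
        (TensorProduct.map coact Hb.aut.symm.toLinearMap) ∘ₗ coact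
  counit :
    (TensorProduct.rid k N).toLinearMap ∘ₗ (TensorProduct.map LinearMap.id Hb.counit) ∘ₗ coact =
      aut.symm.toLinearMap
  coact_aut :
    coact ∘ₗ aut.toLinearMap = (TensorProduct.map aut.toLinearMap Hb.aut.toLinearMap) ∘ₗ coact
  compat :
    coact ∘ₗ TensorProduct.lift act =
      (TensorProduct.map (TensorProduct.lift act) (TensorProduct.lift Hb.mul)) ∘ₗ
        (TensorProduct.tensorTensorTensorComm k N H A H).toLinearMap ∘ₗ
          (TensorProduct.map coact Ac.coact)

/-- A left-right (H,A)-Hom-Hopf module. -/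
structure LRHomHopfModule {Hb : MonoidalHomBialgebra k H} (Ac : HomComoduleAlgebra Hb A)
    (N : Type) [AddCommGroup N] [Module k N] where
  act : A →ₗ[k] N →ₗ[k] N
  aut : N ≃ₗ[k] N
  act_act : ∀ n a b, act (Ac.aut a) (act b n) = act (Ac.mul a b) (aut n)
  act_one : ∀ n, act Ac.one n = aut n
  aut_act : ∀ n a, aut (act a n) = act (Ac.aut a) (aut n)
  coact : N →ₗ[k] N ⊗[k] H
  coassoc :
    (TensorProduct.map aut.symm.toLinearMap Hb.comul) ∘ₗ coact =
      (TensorProduct.assoc k N H H).toLinearMap ∘ₗ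
        (TensorProduct.map coact Hb.aut.symm.toLinearMap) ∘ₗ coact
  counit :
    (TensorProduct.rid k N).toLinearMap ∘ₗ (TensorProduct.map LinearMap.id Hb.counit) ∘ₗ coact =
      aut.symm.toLinearMap
  coact_aut :
    coact ∘ₗ aut.toLinearMap = (TensorProduct.map aut.toLinearMap Hb.aut.toLinearMap) ∘ₗ coact
  compat :
    coact ∘ₗ TensorProduct.lift act =
      (TensorProduct.map (TensorProduct.lift act) (TensorProduct.lift Hb.mul)) ∘ₗ
        (TensorProduct.tensorTensorTensorComm k A H N H).toLinearMap ∘ₗ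
          (TensorProduct.map Ac.coact coact)

/-- Coinvariants (as a set) of a coaction `coact` with structure automorphism `autM`. -/
def coinvSetOf {M : Type} [AddCommGroup M] [Module k M] (oneH : H)
    (coact : M →ₗ[k] M ⊗[k] H) (autM : M ≃ₗ[k] M) : Set M :=
  {m | coact m = autM.symm m ⊗ₜ[k] oneH}

/-- Coinvariants as a submodule. -/
def coinvSubmoduleOf {M : Type} [AddCommGroup M] [Module k M] (oneH : H)
    (coact : M →ₗ[k] M ⊗[k] H) (autM : M ≃ₗ[k] M) : Submodule k M :=
  LinearMap.ker (coact - ((TensorProduct.mk k M H).flip oneH) ∘ₗ autM.symm.toLinearMap)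

/-- The coinvariants `B = A^{co H}` of a Hom-comodule algebra. -/
def coinvA {Hb : MonoidalHomBialgebra k H} (Ac : HomComoduleAlgebra Hb A) : Set A :=
  coinvSetOf Hb.one Ac.coact Ac.aut

/-- The defining relations of the tensor product `M ⊗_B A` for a right `B`-Hom-module `M`. -/
def relSubR {M : Type} [AddCommGroup M] [Module k M]
    (mulA : A →ₗ[k] A →ₗ[k] A) (autA : A ≃ₗ[k] A) (Bset : Set A)
    (act : M →ₗ[k] A →ₗ[k] M) (autM : M ≃ₗ[k] M) : Submodule k (M ⊗[k] A) :=
  Submodule.span k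
    {x | ∃ m a b, b ∈ Bset ∧ x = act m b ⊗ₜ[k] autA a - autM m ⊗ₜ[k] mulA b a}

/-- The defining relations of the tensor product `A ⊗_B M` for a left `B`-Hom-module `M`. -/
def relSubL {M : Type} [AddCommGroup M] [Module k M]
    (mulA : A →ₗ[k] A →ₗ[k] A) (autA : A ≃ₗ[k] A) (Bset : Set A)
    (act : A →ₗ[k] M →ₗ[k] M) (autM : M ≃ₗ[k] M) : Submodule k (A ⊗[k] M) :=
  Submodule.span k
    {x | ∃ a m b, b ∈ Bset ∧ x = autA a ⊗ₜ[k] act b m - mulA a b ⊗ₜ[k] autM m}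

/-- The cotensor product `X □_H V` of a right Hom-comodule and a left Hom-comodule,
as a submodule of `X ⊗ V`. -/
def cotensorSub {X V : Type} [AddCommGroup X] [Module k X] [AddCommGroup V] [Module k V]
    (coactX : X →ₗ[k] X ⊗[k] H) (autX : X ≃ₗ[k] X)
    (coactV : V →ₗ[k] H ⊗[k] V) (autV : V ≃ₗ[k] V) : Submodule k (X ⊗[k] V) :=
  LinearMap.ker
    ((TensorProduct.map coactX autV.symm.toLinearMap) -
      ((TensorProduct.assoc k X H V).symm.toLinearMap ∘ₗ
        TensorProduct.map autX.symm.toLinearMap coactV))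

/-- The canonical Galois map at the level of `A ⊗ A`:
`a ⊗ b ↦ β⁻¹(a)·b₍₀₎ ⊗ α(b₍₁₎)`. -/
def canPreLin {Hb : MonoidalHomBialgebra k H} (Ac : HomComoduleAlgebra Hb A) :
    A ⊗[k] A →ₗ[k] A ⊗[k] H :=
  (TensorProduct.map (TensorProduct.lift Ac.mul) Hb.aut.toLinearMap) ∘ₗ
    (TensorProduct.assoc k A A H).symm.toLinearMap ∘ₗ
      (TensorProduct.map Ac.aut.symm.toLinearMap Ac.coact)

/-- The second canonical Galois map at the level of `A ⊗ A`:
`a ⊗ b ↦ a₍₀₎·β⁻¹(b) ⊗ α(a₍₁₎)`. -/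
def canPreLin' {Hb : MonoidalHomBialgebra k H} (Ac : HomComoduleAlgebra Hb A) :
    A ⊗[k] A →ₗ[k] A ⊗[k] H :=
  (TensorProduct.map (TensorProduct.lift Ac.mul) Hb.aut.toLinearMap) ∘ₗ
    (TensorProduct.assoc k A A H).symm.toLinearMap ∘ₗ
      (TensorProduct.map LinearMap.id (TensorProduct.comm k H A).toLinearMap) ∘ₗ
        (TensorProduct.assoc k A H A).toLinearMap ∘ₗ
          (TensorProduct.map Ac.coact Ac.aut.symm.toLinearMap)

/-- `φ : H → A` is a total integral. -/
def IsTotalIntegral {Hb : MonoidalHomBialgebra k H} (Ac : HomComoduleAlgebra Hb A)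
    (φ : H →ₗ[k] A) : Prop :=
  φ ∘ₗ Hb.aut.toLinearMap = Ac.aut.toLinearMap ∘ₗ φ ∧
    Ac.coact ∘ₗ φ = (TensorProduct.map φ LinearMap.id) ∘ₗ Hb.comul ∧
      φ Hb.one = Ac.one

/-- The Hom-comodule structure on `M ⊗ A` inducing that of `M ⊗_B A`:
`m ⊗ a ↦ (μ⁻¹(m) ⊗ a₍₀₎) ⊗ α(a₍₁₎)`. -/
def quotCoactPreR {Hb : MonoidalHomBialgebra k H} (Ac : HomComoduleAlgebra Hb A)
    {M : Type} [AddCommGroup M] [Module k M] (autM : M ≃ₗ[k] M) :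
    (M ⊗[k] A) →ₗ[k] (M ⊗[k] A) ⊗[k] H :=
  (TensorProduct.assoc k M A H).symm.toLinearMap ∘ₗ
    TensorProduct.map autM.symm.toLinearMap
      ((TensorProduct.map LinearMap.id Hb.aut.toLinearMap) ∘ₗ Ac.coact)

/-- The Hom-comodule structure on `A ⊗ M` inducing that of `A ⊗_B M`:
`a ⊗ m ↦ (a₍₀₎ ⊗ μ⁻¹(m)) ⊗ α(a₍₁₎)`. -/
def quotCoactPreL {Hb : MonoidalHomBialgebra k H} (Ac : HomComoduleAlgebra Hb A)
    {M : Type} [AddCommGroup M] [Module k M] (autM : M ≃ₗ[k] M) :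
    (A ⊗[k] M) →ₗ[k] (A ⊗[k] M) ⊗[k] H :=
  (TensorProduct.assoc k A M H).symm.toLinearMap ∘ₗ
    (TensorProduct.map LinearMap.id (TensorProduct.comm k H M).toLinearMap) ∘ₗ
      (TensorProduct.assoc k A H M).toLinearMap ∘ₗ
        TensorProduct.map
          ((TensorProduct.map LinearMap.id Hb.aut.toLinearMap) ∘ₗ Ac.coact)
          autM.symm.toLinearMap

/-- Bijectivity of the adjunction unit `η_M : M → (M ⊗_B A)^{co H}`, `m ↦ μ⁻¹(m) ⊗ 1_A`,
for a right `B`-Hom-module `M`.  Since the Hom-comodule structure of `M ⊗_B A` is the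
one induced from `M ⊗ A`, it is quantified over all maps `ρbar` (resp. `θ`) induced by
the comodule structure (resp. by `μ⁻¹ ⊗ β⁻¹`) on `M ⊗ A`. -/
def UnitBijectiveR {Hb : MonoidalHomBialgebra k H} (Ac : HomComoduleAlgebra Hb A)
    (Bset : Set A) {M : Type} [AddCommGroup M] [Module k M]
    (S : HomModuleOn Ac Bset M) : Prop :=
  ∀ (ρbar : ((M ⊗[k] A) ⧸ relSubR Ac.mul Ac.aut Bset S.act S.aut) →ₗ[k]
      ((M ⊗[k] A) ⧸ relSubR Ac.mul Ac.aut Bset S.act S.aut) ⊗[k] H)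
    (θ : ((M ⊗[k] A) ⧸ relSubR Ac.mul Ac.aut Bset S.act S.aut) →ₗ[k]
      ((M ⊗[k] A) ⧸ relSubR Ac.mul Ac.aut Bset S.act S.aut)),
    ρbar ∘ₗ (relSubR Ac.mul Ac.aut Bset S.act S.aut).mkQ =
      (TensorProduct.map (relSubR Ac.mul Ac.aut Bset S.act S.aut).mkQ LinearMap.id) ∘ₗ
        quotCoactPreR Ac S.aut →
    θ ∘ₗ (relSubR Ac.mul Ac.aut Bset S.act S.aut).mkQ =
      (relSubR Ac.mul Ac.aut Bset S.act S.aut).mkQ ∘ₗ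
        TensorProduct.map S.aut.symm.toLinearMap Ac.aut.symm.toLinearMap →
    ((∀ m : M, ρbar ((relSubR Ac.mul Ac.aut Bset S.act S.aut).mkQ (S.aut.symm m ⊗ₜ[k] Ac.one)) =
        θ ((relSubR Ac.mul Ac.aut Bset S.act S.aut).mkQ (S.aut.symm m ⊗ₜ[k] Ac.one)) ⊗ₜ[k] Hb.one) ∧
      Function.Injective
        (fun m : M => (relSubR Ac.mul Ac.aut Bset S.act S.aut).mkQ (S.aut.symm m ⊗ₜ[k] Ac.one)) ∧
      ∀ x, ρbar x = θ x ⊗ₜ[k] Hb.one →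
        ∃ m : M, (relSubR Ac.mul Ac.aut Bset S.act S.aut).mkQ (S.aut.symm m ⊗ₜ[k] Ac.one) = x)

/-- The relations of `N^{co H} ⊗_B A` for a right (H,A)-Hom-Hopf module `N`;
the closure of the coinvariants under the `B`-action and the automorphism is
encoded by existential membership. -/
def relCoinvR {Hb : MonoidalHomBialgebra k H} (Ac : HomComoduleAlgebra Hb A)
    (Bset : Set A) {N : Type} [AddCommGroup N] [Module k N]
    (P : HomHopfModule Ac N) :
    Submodule k ((coinvSubmoduleOf Hb.one P.coact P.aut : Submodule k N) ⊗[k] A) :=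
  Submodule.span k
    {x | ∃ (n n' n'' : coinvSubmoduleOf Hb.one P.coact P.aut) (a b : A), b ∈ Bset ∧
      (n' : N) = P.act n b ∧ (n'' : N) = P.aut n ∧
      x = n' ⊗ₜ[k] Ac.aut a - n'' ⊗ₜ[k] Ac.mul b a}

/-- The counit of the adjunction at the level of `N^{co H} ⊗ A`: `n ⊗ a ↦ n · a`. -/
def counitPre {Hb : MonoidalHomBialgebra k H} (Ac : HomComoduleAlgebra Hb A)
    {N : Type} [AddCommGroup N] [Module k N] (P : HomHopfModule Ac N) :
    ((coinvSubmoduleOf Hb.one P.coact P.aut : Submodule k N) ⊗[k] A) →ₗ[k] N :=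
  TensorProduct.lift (P.act ∘ₗ (coinvSubmoduleOf Hb.one P.coact P.aut).subtype)

/-- Bijectivity of the adjunction counit `ε_N : N^{co H} ⊗_B A → N`, `n ⊗ a ↦ n·a`:
equivalently, the lift `N^{co H} ⊗ A → N` is surjective and its kernel is exactly
the defining relations of `⊗_B`. -/
def CounitBijectiveR {Hb : MonoidalHomBialgebra k H} (Ac : HomComoduleAlgebra Hb A)
    (Bset : Set A) {N : Type} [AddCommGroup N] [Module k N]
    (P : HomHopfModule Ac N) : Prop :=
  Function.Surjective (counitPre Ac P) ∧ LinearMap.ker (counitPre Ac P) = relCoinvR Ac Bset P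

/-- Bijectivity of the adjunction unit `η'_M : M → (A ⊗_B M)^{co H}`, `m ↦ 1_A ⊗ μ⁻¹(m)`,
for a left `B`-Hom-module `M`. -/
def UnitBijectiveL {Hb : MonoidalHomBialgebra k H} (Ac : HomComoduleAlgebra Hb A)
    (Bset : Set A) {M : Type} [AddCommGroup M] [Module k M]
    (S : HomLeftModuleOn Ac Bset M) : Prop :=
  ∀ (ρbar : ((A ⊗[k] M) ⧸ relSubL Ac.mul Ac.aut Bset S.act S.aut) →ₗ[k]
      ((A ⊗[k] M) ⧸ relSubL Ac.mul Ac.aut Bset S.act S.aut) ⊗[k] H)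
    (θ : ((A ⊗[k] M) ⧸ relSubL Ac.mul Ac.aut Bset S.act S.aut) →ₗ[k]
      ((A ⊗[k] M) ⧸ relSubL Ac.mul Ac.aut Bset S.act S.aut)),
    ρbar ∘ₗ (relSubL Ac.mul Ac.aut Bset S.act S.aut).mkQ =
      (TensorProduct.map (relSubL Ac.mul Ac.aut Bset S.act S.aut).mkQ LinearMap.id) ∘ₗ
        quotCoactPreL Ac S.aut →
    θ ∘ₗ (relSubL Ac.mul Ac.aut Bset S.act S.aut).mkQ =
      (relSubL Ac.mul Ac.aut Bset S.act S.aut).mkQ ∘ₗ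
        TensorProduct.map Ac.aut.symm.toLinearMap S.aut.symm.toLinearMap →
    ((∀ m : M, ρbar ((relSubL Ac.mul Ac.aut Bset S.act S.aut).mkQ (Ac.one ⊗ₜ[k] S.aut.symm m)) =
        θ ((relSubL Ac.mul Ac.aut Bset S.act S.aut).mkQ (Ac.one ⊗ₜ[k] S.aut.symm m)) ⊗ₜ[k] Hb.one) ∧
      Function.Injective
        (fun m : M => (relSubL Ac.mul Ac.aut Bset S.act S.aut).mkQ (Ac.one ⊗ₜ[k] S.aut.symm m)) ∧
      ∀ x, ρbar x = θ x ⊗ₜ[k] Hb.one →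
        ∃ m : M, (relSubL Ac.mul Ac.aut Bset S.act S.aut).mkQ (Ac.one ⊗ₜ[k] S.aut.symm m) = x)

/-- The relations of `A ⊗_B N^{co H}` for a left-right (H,A)-Hom-Hopf module `N`. -/
def relCoinvL {Hb : MonoidalHomBialgebra k H} (Ac : HomComoduleAlgebra Hb A)
    (Bset : Set A) {N : Type} [AddCommGroup N] [Module k N]
    (P : LRHomHopfModule Ac N) :
    Submodule k (A ⊗[k] (coinvSubmoduleOf Hb.one P.coact P.aut : Submodule k N)) :=
  Submodule.span k
    {x | ∃ (n n' n'' : coinvSubmoduleOf Hb.one P.coact P.aut) (a b : A), b ∈ Bset ∧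
      (n' : N) = P.act b n ∧ (n'' : N) = P.aut n ∧
      x = Ac.aut a ⊗ₜ[k] n' - Ac.mul a b ⊗ₜ[k] n''}

/-- The counit at the level of `A ⊗ N^{co H}`: `a ⊗ n ↦ a · n`. -/
def counitPreL {Hb : MonoidalHomBialgebra k H} (Ac : HomComoduleAlgebra Hb A)
    {N : Type} [AddCommGroup N] [Module k N] (P : LRHomHopfModule Ac N) :
    (A ⊗[k] (coinvSubmoduleOf Hb.one P.coact P.aut : Submodule k N)) →ₗ[k] N :=
  TensorProduct.lift (P.act.compl₂ (coinvSubmoduleOf Hb.one P.coact P.aut).subtype)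

/-- Bijectivity of the counit `ε'_N : A ⊗_B N^{co H} → N`. -/
def CounitBijectiveL {Hb : MonoidalHomBialgebra k H} (Ac : HomComoduleAlgebra Hb A)
    (Bset : Set A) {N : Type} [AddCommGroup N] [Module k N]
    (P : LRHomHopfModule Ac N) : Prop :=
  Function.Surjective (counitPreL Ac P) ∧ LinearMap.ker (counitPreL Ac P) = relCoinvL Ac Bset P

/-- A morphism of right `B`-Hom-modules. -/
def IsHomModuleOnHomR {Hb : MonoidalHomBialgebra k H} (Ac : HomComoduleAlgebra Hb A)
    (Bset : Set A) {M₁ M₂ : Type} [AddCommGroup M₁] [Module k M₁] [AddCommGroup M₂] [Module k M₂]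
    (S₁ : HomModuleOn Ac Bset M₁) (S₂ : HomModuleOn Ac Bset M₂) (f : M₁ →ₗ[k] M₂) : Prop :=
  (∀ m, ∀ b ∈ Bset, f (S₁.act m b) = S₂.act (f m) b) ∧ ∀ m, f (S₁.aut m) = S₂.aut (f m)

/-- A morphism of left `B`-Hom-modules. -/
def IsHomModuleOnHomL {Hb : MonoidalHomBialgebra k H} (Ac : HomComoduleAlgebra Hb A)
    (Bset : Set A) {M₁ M₂ : Type} [AddCommGroup M₁] [Module k M₁] [AddCommGroup M₂] [Module k M₂]
    (S₁ : HomLeftModuleOn Ac Bset M₁) (S₂ : HomLeftModuleOn Ac Bset M₂) (f : M₁ →ₗ[k] M₂) : Prop :=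
  (∀ m, ∀ b ∈ Bset, f (S₁.act b m) = S₂.act b (f m)) ∧ ∀ m, f (S₁.aut m) = S₂.aut (f m)

/-- `A` is faithfully flat as a left `B`-Hom-module: the induced functor `− ⊗_B A`
on right `B`-Hom-modules preserves and reflects exactness. -/
def FaithfullyFlatLeftOf {Hb : MonoidalHomBialgebra k H} (Ac : HomComoduleAlgebra Hb A)
    (Bset : Set A) : Prop :=
  ∀ (M₁ M₂ M₃ : Type) [AddCommGroup M₁] [Module k M₁] [AddCommGroup M₂] [Module k M₂]
    [AddCommGroup M₃] [Module k M₃]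
    (S₁ : HomModuleOn Ac Bset M₁) (S₂ : HomModuleOn Ac Bset M₂) (S₃ : HomModuleOn Ac Bset M₃)
    (f : M₁ →ₗ[k] M₂) (g : M₂ →ₗ[k] M₃),
    IsHomModuleOnHomR Ac Bset S₁ S₂ f → IsHomModuleOnHomR Ac Bset S₂ S₃ g →
    ∀ (fbar : ((M₁ ⊗[k] A) ⧸ relSubR Ac.mul Ac.aut Bset S₁.act S₁.aut) →ₗ[k]
        ((M₂ ⊗[k] A) ⧸ relSubR Ac.mul Ac.aut Bset S₂.act S₂.aut))
      (gbar : ((M₂ ⊗[k] A) ⧸ relSubR Ac.mul Ac.aut Bset S₂.act S₂.aut) →ₗ[k]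
        ((M₃ ⊗[k] A) ⧸ relSubR Ac.mul Ac.aut Bset S₃.act S₃.aut)),
      fbar ∘ₗ (relSubR Ac.mul Ac.aut Bset S₁.act S₁.aut).mkQ =
        (relSubR Ac.mul Ac.aut Bset S₂.act S₂.aut).mkQ ∘ₗ TensorProduct.map f LinearMap.id →
      gbar ∘ₗ (relSubR Ac.mul Ac.aut Bset S₂.act S₂.aut).mkQ =
        (relSubR Ac.mul Ac.aut Bset S₃.act S₃.aut).mkQ ∘ₗ TensorProduct.map g LinearMap.id →
      (LinearMap.range f = LinearMap.ker g ↔ LinearMap.range fbar = LinearMap.ker gbar)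

/-- `A` is faithfully flat as a right `B`-Hom-module: the induced functor `A ⊗_B −`
on left `B`-Hom-modules preserves and reflects exactness. -/
def FaithfullyFlatRightOf {Hb : MonoidalHomBialgebra k H} (Ac : HomComoduleAlgebra Hb A)
    (Bset : Set A) : Prop :=
  ∀ (M₁ M₂ M₃ : Type) [AddCommGroup M₁] [Module k M₁] [AddCommGroup M₂] [Module k M₂]
    [AddCommGroup M₃] [Module k M₃]
    (S₁ : HomLeftModuleOn Ac Bset M₁) (S₂ : HomLeftModuleOn Ac Bset M₂)
    (S₃ : HomLeftModuleOn Ac Bset M₃)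
    (f : M₁ →ₗ[k] M₂) (g : M₂ →ₗ[k] M₃),
    IsHomModuleOnHomL Ac Bset S₁ S₂ f → IsHomModuleOnHomL Ac Bset S₂ S₃ g →
    ∀ (fbar : ((A ⊗[k] M₁) ⧸ relSubL Ac.mul Ac.aut Bset S₁.act S₁.aut) →ₗ[k]
        ((A ⊗[k] M₂) ⧸ relSubL Ac.mul Ac.aut Bset S₂.act S₂.aut))
      (gbar : ((A ⊗[k] M₂) ⧸ relSubL Ac.mul Ac.aut Bset S₂.act S₂.aut) →ₗ[k]
        ((A ⊗[k] M₃) ⧸ relSubL Ac.mul Ac.aut Bset S₃.act S₃.aut)),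
      fbar ∘ₗ (relSubL Ac.mul Ac.aut Bset S₁.act S₁.aut).mkQ =
        (relSubL Ac.mul Ac.aut Bset S₂.act S₂.aut).mkQ ∘ₗ TensorProduct.map LinearMap.id f →
      gbar ∘ₗ (relSubL Ac.mul Ac.aut Bset S₂.act S₂.aut).mkQ =
        (relSubL Ac.mul Ac.aut Bset S₃.act S₃.aut).mkQ ∘ₗ TensorProduct.map LinearMap.id g →
      (LinearMap.range f = LinearMap.ker g ↔ LinearMap.range fbar = LinearMap.ker gbar)

/-- `A` is flat as a left `B`-Hom-module: `− ⊗_B A` preserves exactness. -/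
def FlatLeftOf {Hb : MonoidalHomBialgebra k H} (Ac : HomComoduleAlgebra Hb A)
    (Bset : Set A) : Prop :=
  ∀ (M₁ M₂ M₃ : Type) [AddCommGroup M₁] [Module k M₁] [AddCommGroup M₂] [Module k M₂]
    [AddCommGroup M₃] [Module k M₃]
    (S₁ : HomModuleOn Ac Bset M₁) (S₂ : HomModuleOn Ac Bset M₂) (S₃ : HomModuleOn Ac Bset M₃)
    (f : M₁ →ₗ[k] M₂) (g : M₂ →ₗ[k] M₃),
    IsHomModuleOnHomR Ac Bset S₁ S₂ f → IsHomModuleOnHomR Ac Bset S₂ S₃ g →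
    ∀ (fbar : ((M₁ ⊗[k] A) ⧸ relSubR Ac.mul Ac.aut Bset S₁.act S₁.aut) →ₗ[k]
        ((M₂ ⊗[k] A) ⧸ relSubR Ac.mul Ac.aut Bset S₂.act S₂.aut))
      (gbar : ((M₂ ⊗[k] A) ⧸ relSubR Ac.mul Ac.aut Bset S₂.act S₂.aut) →ₗ[k]
        ((M₃ ⊗[k] A) ⧸ relSubR Ac.mul Ac.aut Bset S₃.act S₃.aut)),
      fbar ∘ₗ (relSubR Ac.mul Ac.aut Bset S₁.act S₁.aut).mkQ =
        (relSubR Ac.mul Ac.aut Bset S₂.act S₂.aut).mkQ ∘ₗ TensorProduct.map f LinearMap.id →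
      gbar ∘ₗ (relSubR Ac.mul Ac.aut Bset S₂.act S₂.aut).mkQ =
        (relSubR Ac.mul Ac.aut Bset S₃.act S₃.aut).mkQ ∘ₗ TensorProduct.map g LinearMap.id →
      (LinearMap.range f = LinearMap.ker g → LinearMap.range fbar = LinearMap.ker gbar)

end


noncomputable section
namespace HomDT

section gen
variable {k : Type} [Field k]
variable {M N P Q S T U V W : Type} [AddCommGroup M] [Module k M] [AddCommGroup N] [Module k N]
  [AddCommGroup P] [Module k P] [AddCommGroup Q] [Module k Q] [AddCommGroup S] [Module k S]
  [AddCommGroup T] [Module k T] [AddCommGroup U] [Module k U] [AddCommGroup V] [Module k V]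
  [AddCommGroup W] [Module k W]

/-- Acting componentwise is associative when both components are. -/
theorem map₂_assoc (f : M →ₗ[k] P →ₗ[k] M) (g : N →ₗ[k] N →ₗ[k] N) (p : P →ₗ[k] P →ₗ[k] P)
    (hf : ∀ m a b, f (f m a) b = f m (p a b)) (hg : ∀ m a b, g (g m a) b = g m (g a b))
    (w : M ⊗[k] N) (u v : P ⊗[k] N) :
    TensorProduct.map₂ f g (TensorProduct.map₂ f g w u) v =
      TensorProduct.map₂ f g w (TensorProduct.map₂ p g u v) := by
  induction w with
  | zero => simp
  | add x y hx hy => simp only [map_add, LinearMap.add_apply, hx, hy]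
  | tmul m n =>
    induction u with
    | zero => simp
    | add x y hx hy => simp only [map_add, LinearMap.add_apply, hx, hy]
    | tmul a b =>
      induction v with
      | zero => simp
      | add x y hx hy => simp only [map_add, LinearMap.add_apply, hx, hy]
      | tmul c d => simp [TensorProduct.map₂_apply_tmul, hf, hg]

theorem map₂_map (f : M →ₗ[k] P →ₗ[k] Q) (g : N →ₗ[k] S →ₗ[k] T)
    (f' : M →ₗ[k] P →ₗ[k] Q) (g' : N →ₗ[k] S →ₗ[k] T)
    (a : M →ₗ[k] M) (b : P →ₗ[k] P) (c : Q →ₗ[k] Q) (a' : N →ₗ[k] N) (b' : S →ₗ[k] S)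
    (c' : T →ₗ[k] T)
    (hf : ∀ m p, c (f m p) = f' (a m) (b p)) (hg : ∀ m p, c' (g m p) = g' (a' m) (b' p))
    (w : M ⊗[k] N) (u : P ⊗[k] S) :
    TensorProduct.map c c' (TensorProduct.map₂ f g w u) =
      TensorProduct.map₂ f' g' (TensorProduct.map a a' w) (TensorProduct.map b b' u) := by
  induction w with
  | zero => simp
  | add x y hx hy => simp only [map_add, LinearMap.add_apply, hx, hy]
  | tmul m n =>
    induction u with
    | zero => simp
    | add x y hx hy => simp only [map_add, LinearMap.add_apply, hx, hy]
    | tmul a b => simp [TensorProduct.map₂_apply_tmul, hf, hg]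

theorem map₂_tmul_left (f : M →ₗ[k] P →ₗ[k] Q) (g : N →ₗ[k] S →ₗ[k] S) (m : M) (n : N)
    (hn : ∀ s, g n s = s) (u : P ⊗[k] S) :
    TensorProduct.map₂ f g (m ⊗ₜ n) u = (f m).rTensor S u := by
  induction u with
  | zero => simp
  | add x y hx hy => simp only [map_add, LinearMap.add_apply, hx, hy]
  | tmul a b => simp [TensorProduct.map₂_apply_tmul, hn]

theorem map₂_tmul_right (f : M →ₗ[k] P →ₗ[k] Q) (g : S →ₗ[k] N →ₗ[k] S) (p : P) (n : N)
    (hn : ∀ s, g s n = s) (u : M ⊗[k] S) :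
    TensorProduct.map₂ f g u (p ⊗ₜ n) = (f.flip p).rTensor S u := by
  induction u with
  | zero => simp
  | add x y hx hy => simp only [map_add, LinearMap.add_apply, hx, hy]
  | tmul a b => simp [TensorProduct.map₂_apply_tmul, hn]

/-- Applying `f` componentwise commutes with the multiplicativity. -/
theorem map₂_rTensor (f : M →ₗ[k] P →ₗ[k] M) (p : P →ₗ[k] P →ₗ[k] P) (g : N →ₗ[k] N →ₗ[k] N)
    (hf : ∀ m a b, f (f m a) b = f m (p a b)) (m : M) (u v : P ⊗[k] N) :
    TensorProduct.map₂ f g ((f m).rTensor N u) v =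
      (f m).rTensor N (TensorProduct.map₂ p g u v) := by
  induction u with
  | zero => simp
  | add x y hx hy => simp only [map_add, LinearMap.add_apply, hx, hy]
  | tmul a b =>
    induction v with
    | zero => simp
    | add x y hx hy => simp only [map_add, LinearMap.add_apply, hx, hy]
    | tmul c d => simp [TensorProduct.map₂_apply_tmul, hf]

theorem assoc_rTensor (f : M →ₗ[k] N) (z : (M ⊗[k] P) ⊗[k] Q) :
    TensorProduct.assoc k N P Q ((f.rTensor P).rTensor Q z) =
      f.rTensor (P ⊗[k] Q) (TensorProduct.assoc k M P Q z) := by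
  have : (TensorProduct.assoc k N P Q).toLinearMap ∘ₗ (f.rTensor P).rTensor Q =
      f.rTensor (P ⊗[k] Q) ∘ₗ (TensorProduct.assoc k M P Q).toLinearMap := by
    ext; simp
  exact LinearMap.congr_fun this z

theorem lTensor_rTensor (f : M →ₗ[k] N) (g : P →ₗ[k] Q) (z : M ⊗[k] P) :
    g.lTensor N (f.rTensor P z) = f.rTensor Q (g.lTensor M z) := by
  have : g.lTensor N ∘ₗ f.rTensor P = f.rTensor Q ∘ₗ g.lTensor M := by
    ext; simp
  exact LinearMap.congr_fun this z

theorem rTensor_rTensor (f : M →ₗ[k] N) (g : N →ₗ[k] P) (z : M ⊗[k] Q) :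
    g.rTensor Q (f.rTensor Q z) = (g ∘ₗ f).rTensor Q z := by
  rw [LinearMap.rTensor_comp]; rfl

end gen

/-- Untwisted data: an ordinary bialgebra `H` with automorphism `α` and an ordinary
right `H`-comodule algebra `A` with compatible automorphism `β`. -/
structure UD (k : Type) [Field k] (H A : Type) [AddCommGroup H] [Module k H]
    [AddCommGroup A] [Module k A] where
  mH : H →ₗ[k] H →ₗ[k] H
  oH : H
  Δ : H →ₗ[k] H ⊗[k] H
  ε : H →ₗ[k] k
  α : H ≃ₗ[k] H
  mA : A →ₗ[k] A →ₗ[k] A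
  oA : A
  β : A ≃ₗ[k] A
  ρ : A →ₗ[k] A ⊗[k] H
  mH_assoc : ∀ x y z, mH (mH x y) z = mH x (mH y z)
  oH_mul : ∀ x, mH oH x = x
  mul_oH : ∀ x, mH x oH = x
  coassocH : ∀ x, TensorProduct.assoc k H H H (Δ.rTensor H (Δ x)) = Δ.lTensor H (Δ x)
  counit_left : ∀ x, TensorProduct.lid k H (ε.rTensor H (Δ x)) = x
  counit_right : ∀ x, TensorProduct.rid k H (ε.lTensor H (Δ x)) = x
  Δ_mul : ∀ x y, Δ (mH x y) = TensorProduct.map₂ mH mH (Δ x) (Δ y)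
  Δ_one : Δ oH = oH ⊗ₜ oH
  ε_one : ε oH = 1
  α_mul : ∀ x y, α (mH x y) = mH (α x) (α y)
  α_one : α oH = oH
  Δ_α : ∀ x, Δ (α x) = TensorProduct.map α.toLinearMap α.toLinearMap (Δ x)
  mA_assoc : ∀ x y z, mA (mA x y) z = mA x (mA y z)
  oA_mul : ∀ x, mA oA x = x
  mul_oA : ∀ x, mA x oA = x
  β_mul : ∀ x y, β (mA x y) = mA (β x) (β y)
  β_one : β oA = oA
  coassoc : ∀ a, TensorProduct.assoc k A H H (ρ.rTensor H (ρ a)) = Δ.lTensor A (ρ a)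
  counit : ∀ a, TensorProduct.rid k A (ε.lTensor A (ρ a)) = a
  ρ_β : ∀ a, ρ (β a) = TensorProduct.map β.toLinearMap α.toLinearMap (ρ a)
  ρ_mul : ∀ a b, ρ (mA a b) = TensorProduct.map₂ mA mH (ρ a) (ρ b)
  ρ_one : ρ oA = oA ⊗ₜ oH

variable {k : Type} [Field k] {H A : Type} [AddCommGroup H] [Module k H]
    [AddCommGroup A] [Module k A]

/-- Coinvariants of `A`. -/
def UD.B (D : UD k H A) : Submodule k A where
  carrier := {a | D.ρ a = a ⊗ₜ D.oH}
  add_mem' := by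
    intro a b ha hb
    simp only [Set.mem_ofPred_eq] at *
    rw [map_add, ha, hb, TensorProduct.add_tmul]
  zero_mem' := by simp
  smul_mem' := by
    intro c a ha
    simp only [Set.mem_ofPred_eq] at *
    rw [map_smul, ha, TensorProduct.smul_tmul']

theorem UD.mem_B (D : UD k H A) {a : A} : a ∈ D.B ↔ D.ρ a = a ⊗ₜ D.oH := Iff.rfl

theorem UD.one_B (D : UD k H A) : D.oA ∈ D.B := D.ρ_one

theorem UD.mul_B (D : UD k H A) {a b : A} (ha : a ∈ D.B) (hb : b ∈ D.B) : D.mA a b ∈ D.B := by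
  rw [UD.mem_B] at *
  rw [D.ρ_mul, ha, hb, TensorProduct.map₂_apply_tmul, TensorProduct.map_tmul, D.mul_oH]

theorem UD.β_B (D : UD k H A) {a : A} (ha : a ∈ D.B) : D.β a ∈ D.B := by
  rw [UD.mem_B] at *
  rw [D.ρ_β, ha]; simp [D.α_one]

theorem UD.exists_proj (D : UD k H A) : ∃ p : A →ₗ[k] A, (∀ a, p a ∈ D.B) ∧ ∀ b ∈ D.B, p b = b := by
  obtain ⟨q, hq⟩ := LinearMap.exists_leftInverse_of_injective D.B.subtype (by simp)
  refine ⟨D.B.subtype ∘ₗ q, fun a => (q a).2, fun b hb => ?_⟩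
  have := LinearMap.congr_fun hq ⟨b, hb⟩
  simpa using congrArg Subtype.val this

/-- Right `A`-modules with compatible automorphism. -/
structure AMod (D : UD k H A) (N : Type) [AddCommGroup N] [Module k N] where
  act : N →ₗ[k] A →ₗ[k] N
  aut : N ≃ₗ[k] N
  act_act : ∀ n a b, act (act n a) b = act n (D.mA a b)
  act_one : ∀ n, act n D.oA = n
  aut_act : ∀ n a, aut (act n a) = act (aut n) (D.β a)

/-- Right `B`-modules with compatible automorphism. -/
structure BMod (D : UD k H A) (N : Type) [AddCommGroup N] [Module k N] where
  act : N →ₗ[k] A →ₗ[k] N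
  aut : N ≃ₗ[k] N
  act_act : ∀ n, ∀ a ∈ D.B, ∀ b ∈ D.B, act (act n a) b = act n (D.mA a b)
  act_one : ∀ n, act n D.oA = n
  aut_act : ∀ n, ∀ a ∈ D.B, aut (act n a) = act (aut n) (D.β a)

/-- Hopf modules with compatible automorphism. -/
structure HMod (D : UD k H A) (N : Type) [AddCommGroup N] [Module k N] extends AMod D N where
  coact : N →ₗ[k] N ⊗[k] H
  coassoc : ∀ n, TensorProduct.assoc k N H H (coact.rTensor H (coact n)) = D.Δ.lTensor N (coact n)
  counit : ∀ n, TensorProduct.rid k N (D.ε.lTensor N (coact n)) = n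
  coact_aut : ∀ n, coact (aut n) = TensorProduct.map aut.toLinearMap D.α.toLinearMap (coact n)
  compat : ∀ n a, coact (act n a) = TensorProduct.map₂ act D.mH (coact n) (D.ρ a)

/-- The relations of the tensor product over `B`. -/
def UD.rel (D : UD k H A) {M : Type} [AddCommGroup M] [Module k M] (act : M →ₗ[k] A →ₗ[k] M) :
    Submodule k (M ⊗[k] A) :=
  Submodule.span k {x | ∃ m a b, b ∈ D.B ∧ x = act m b ⊗ₜ[k] a - m ⊗ₜ[k] D.mA b a}

variable {D : UD k H A}
variable {M N : Type} [AddCommGroup M] [Module k M] [AddCommGroup N] [Module k N]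

/-- Restriction of scalars. -/
def AMod.toB (T : AMod D N) : BMod D N where
  act := T.act
  aut := T.aut
  act_act := fun n a _ b _ => T.act_act n a b
  act_one := T.act_one
  aut_act := fun n a _ => T.aut_act n a

/-- The diagonal structure on `N ⊗ H`. -/
def AMod.diag (T : AMod D N) : AMod D (N ⊗[k] H) where
  act := (TensorProduct.map₂ T.act D.mH).compl₂ D.ρ
  aut := TensorProduct.congr T.aut D.α
  act_act := by
    intro n a b
    simp only [LinearMap.compl₂_apply]
    rw [map₂_assoc _ _ D.mA T.act_act D.mH_assoc, D.ρ_mul]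
  act_one := by
    intro n
    simp only [LinearMap.compl₂_apply]
    rw [D.ρ_one, map₂_tmul_right _ _ _ _ D.mul_oH]
    have : T.act.flip D.oA = LinearMap.id := by
      ext n; simp [T.act_one]
    rw [this]; simp
  aut_act := by
    intro n a
    simp only [LinearMap.compl₂_apply, D.ρ_β]
    exact map₂_map _ _ _ _ _ _ _ _ _ _ (fun m p => T.aut_act m p) (fun m p => D.α_mul m p) _ _

theorem AMod.diag_act (T : AMod D N) (w : N ⊗[k] H) (a : A) :
    T.diag.act w a = TensorProduct.map₂ T.act D.mH w (D.ρ a) := rfl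

theorem AMod.diag_act_one (T : AMod D N) (n : N) (a : A) :
    T.diag.act (n ⊗ₜ D.oH) a = (T.act n).rTensor H (D.ρ a) := by
  rw [AMod.diag_act, map₂_tmul_left _ _ _ _ D.oH_mul]

/-- The canonical map for a bilinear action. -/
def UD.can (D : UD k H A) (act : N →ₗ[k] A →ₗ[k] N) : N ⊗[k] A →ₗ[k] N ⊗[k] H :=
  TensorProduct.lift (LinearMap.mk₂ k (fun n a => (act n).rTensor H (D.ρ a))
    (by intros; simp [LinearMap.rTensor_add]) (by intros; simp [LinearMap.rTensor_smul])
    (by intros; simp) (by intros; simp))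

@[simp] theorem UD.can_tmul (D : UD k H A) (act : N →ₗ[k] A →ₗ[k] N) (n : N) (a : A) :
    D.can act (n ⊗ₜ a) = (act n).rTensor H (D.ρ a) := rfl

theorem UD.mem_rel (D : UD k H A) (act : M →ₗ[k] A →ₗ[k] M) (m : M) (a : A) {b : A} (hb : b ∈ D.B) :
    act m b ⊗ₜ[k] a - m ⊗ₜ[k] D.mA b a ∈ D.rel act :=
  Submodule.subset_span ⟨m, a, b, hb, rfl⟩

theorem UD.rel_le (D : UD k H A) (act : M →ₗ[k] A →ₗ[k] M) (R : Submodule k (M ⊗[k] A))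
    (h : ∀ m a b, b ∈ D.B → act m b ⊗ₜ[k] a - m ⊗ₜ[k] D.mA b a ∈ R) : D.rel act ≤ R := by
  refine Submodule.span_le.2 ?_
  rintro x ⟨m, a, b, hb, rfl⟩
  exact h m a b hb

/-- functoriality of the relations -/
theorem UD.rel_map (D : UD k H A) (act : M →ₗ[k] A →ₗ[k] M) (act' : N →ₗ[k] A →ₗ[k] N)
    (f : M →ₗ[k] N) (hf : ∀ m, ∀ b ∈ D.B, f (act m b) = act' (f m) b) {x : M ⊗[k] A}
    (hx : x ∈ D.rel act) : f.rTensor A x ∈ D.rel act' := by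
  have : D.rel act ≤ (D.rel act').comap (f.rTensor A) := by
    apply D.rel_le
    intro m a b hb
    simp only [Submodule.mem_comap, map_sub, LinearMap.rTensor_tmul]
    rw [hf m b hb]
    exact D.mem_rel _ _ _ hb
  exact this hx

theorem UD.ρ_bmul (D : UD k H A) {b : A} (hb : b ∈ D.B) (a : A) :
    D.ρ (D.mA b a) = (D.mA b).rTensor H (D.ρ a) := by
  rw [D.ρ_mul, D.mem_B.1 hb, map₂_tmul_left _ _ _ _ D.oH_mul]

theorem AMod.can_rel (T : AMod D N) {x : N ⊗[k] A} (hx : x ∈ D.rel T.act) :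
    D.can T.act x = 0 := by
  have : D.rel T.act ≤ LinearMap.ker (D.can T.act) := by
    apply D.rel_le
    intro m a b hb
    simp only [LinearMap.mem_ker, map_sub, UD.can_tmul]
    rw [D.ρ_bmul hb, rTensor_rTensor, sub_eq_zero]
    congr 2
    ext c
    exact T.act_act m b c
  exact this hx

/-- `A` as a module over itself. -/
def UD.reg (D : UD k H A) : AMod D A where
  act := D.mA
  aut := D.β
  act_act := D.mA_assoc
  act_one := D.mul_oA
  aut_act := D.β_mul

theorem AMod.can_rTensor (T : AMod D N) (n : N) (w : A ⊗[k] A) :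
    D.can T.act ((T.act n).rTensor A w) = (T.act n).rTensor H (D.can D.mA w) := by
  induction w with
  | zero => simp
  | add x y hx hy => simp only [map_add, hx, hy]
  | tmul a b =>
    simp only [LinearMap.rTensor_tmul, UD.can_tmul]
    rw [rTensor_rTensor]
    congr 2
    ext c
    exact T.act_act n a c

/-- The Galois property: `can` is surjective with kernel the relations. -/
def UD.Galois (D : UD k H A) : Prop :=
  Function.Surjective (D.can D.mA) ∧ ∀ z, D.can D.mA z = 0 → z ∈ D.rel D.mA

theorem AMod.can_galois (hG : D.Galois) (T : AMod D N) :
    Function.Surjective (D.can T.act) ∧ ∀ z, D.can T.act z = 0 → z ∈ D.rel T.act := by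
  obtain ⟨s, hs⟩ := LinearMap.exists_rightInverse_of_surjective (D.can D.mA)
    (LinearMap.range_eq_top.2 hG.1)
  have hs' : ∀ u, D.can D.mA (s u) = u := fun u => LinearMap.congr_fun hs u
  let Φ : N ⊗[k] H →ₗ[k] N ⊗[k] A :=
    TensorProduct.lift (LinearMap.mk₂ k (fun n h => (T.act n).rTensor A (s (D.oA ⊗ₜ h)))
      (by intros; simp [LinearMap.rTensor_add]) (by intros; simp [LinearMap.rTensor_smul])
      (by intros; simp [TensorProduct.tmul_add]) (by intros; simp [TensorProduct.tmul_smul]))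
  have hΦ : ∀ n h, Φ (n ⊗ₜ h) = (T.act n).rTensor A (s (D.oA ⊗ₜ h)) := fun _ _ => rfl
  have h1 : ∀ w, D.can T.act (Φ w) = w := by
    intro w
    induction w with
    | zero => simp
    | add x y hx hy => simp only [map_add, hx, hy]
    | tmul n h =>
      rw [hΦ, T.can_rTensor, hs']
      simp [T.act_one]
  refine ⟨fun w => ⟨Φ w, h1 w⟩, ?_⟩
  have hrel : ∀ n x, x ∈ D.rel D.mA → (T.act n).rTensor A x ∈ D.rel T.act := by
    intro n x hx
    exact D.rel_map D.mA T.act (T.act n) (fun m b _ => (T.act_act n m b).symm) hx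
  have h2 : ∀ n (u : A ⊗[k] H), Φ ((T.act n).rTensor H u) - (T.act n).rTensor A (s u) ∈ D.rel T.act := by
    intro n u
    induction u with
    | zero => simp
    | add x y hx hy =>
      simp only [map_add]
      have := Submodule.add_mem _ hx hy
      convert this using 1
      abel
    | tmul a h =>
      rw [LinearMap.rTensor_tmul, hΦ]
      have e : T.act (T.act n a) = T.act n ∘ₗ D.mA a := by
        ext c; exact T.act_act n a c
      rw [e, ← rTensor_rTensor, ← map_sub]
      apply hrel
      apply hG.2
      have := D.reg.can_rTensor a (s (D.oA ⊗ₜ h))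
      change D.can D.mA ((D.mA a).rTensor A _) = (D.mA a).rTensor H _ at this
      rw [map_sub, this, hs', hs']
      simp [D.mul_oA]
  have h3 : ∀ z, Φ (D.can T.act z) - z ∈ D.rel T.act := by
    intro z
    induction z with
    | zero => simp
    | add x y hx hy =>
      simp only [map_add]
      have := Submodule.add_mem _ hx hy
      convert this using 1
      abel
    | tmul n a =>
      rw [UD.can_tmul]
      have := h2 n (D.ρ a)
      have h4 : s (D.ρ a) - D.oA ⊗ₜ a ∈ D.rel D.mA := by
        apply hG.2
        rw [map_sub, hs', UD.can_tmul]
        have : D.mA D.oA = LinearMap.id := by ext x; exact D.oA_mul x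
        rw [this]; simp
      have h5 := hrel n _ h4
      rw [map_sub, LinearMap.rTensor_tmul, T.act_one] at h5
      have := Submodule.add_mem _ this h5
      convert this using 1
      abel
  intro z hz
  have := h3 z
  rw [hz, map_zero, zero_sub] at this
  exact (Submodule.neg_mem_iff _).1 this

/-- The difference map `n ↦ ρ(n) - n ⊗ 1`. -/
def HMod.d (P : HMod D N) : N →ₗ[k] N ⊗[k] H :=
  P.coact - (TensorProduct.mk k N H).flip D.oH

theorem HMod.d_apply (P : HMod D N) (n : N) : P.d n = P.coact n - n ⊗ₜ D.oH := rfl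

theorem HMod.coact_inj (P : HMod D N) {n : N} (h : P.coact n = 0) : n = 0 := by
  have := P.counit n
  rw [h] at this
  simpa using this.symm

theorem HMod.d_act (P : HMod D N) (n : N) {b : A} (hb : b ∈ D.B) :
    P.d (P.act n b) = P.diag.act (P.d n) b := by
  rw [HMod.d_apply, HMod.d_apply, P.compat, map_sub, LinearMap.sub_apply, AMod.diag_act,
    AMod.diag_act, D.mem_B.1 hb, TensorProduct.map₂_apply_tmul, TensorProduct.map_tmul, D.mul_oH]

theorem HMod.d_aut (P : HMod D N) (n : N) : P.d (P.aut n) = P.diag.aut (P.d n) := by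
  rw [HMod.d_apply, HMod.d_apply, P.coact_aut, map_sub]
  simp [AMod.diag, D.α_one]
  rfl

theorem HMod.can_d (P : HMod D N) (x : N ⊗[k] A) :
    D.can P.diag.act (P.d.rTensor A x) = P.coact.rTensor H (D.can P.act x) -
      (TensorProduct.assoc k N H H).symm (D.Δ.lTensor N (D.can P.act x)) := by
  induction x with
  | zero => simp
  | add x y hx hy => simp only [map_add, hx, hy]; abel
  | tmul n a =>
    rw [LinearMap.rTensor_tmul, HMod.d_apply, TensorProduct.sub_tmul, map_sub]
    congr 1
    · simp only [UD.can_tmul]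
      rw [rTensor_rTensor]
      congr 2
      ext c
      exact (P.compat n c).symm
    · simp only [UD.can_tmul]
      rw [LinearEquiv.eq_symm_apply]
      have : P.diag.act (n ⊗ₜ D.oH) = (P.act n).rTensor H ∘ₗ D.ρ := by
        ext c; exact P.toAMod.diag_act_one n c
      rw [this, ← rTensor_rTensor, assoc_rTensor, lTensor_rTensor, D.coassoc]

theorem HMod.exact_coact (P : HMod D N) (w : N ⊗[k] H)
    (hw : P.coact.rTensor H w - (TensorProduct.assoc k N H H).symm (D.Δ.lTensor N w) = 0) :
    P.coact (TensorProduct.rid k N (D.ε.lTensor N w)) = w := by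
  have h1 : ∀ w, P.coact (TensorProduct.rid k N (D.ε.lTensor N w)) =
      TensorProduct.rid k (N ⊗[k] H) (D.ε.lTensor (N ⊗[k] H) (P.coact.rTensor H w)) := by
    intro w
    induction w with
    | zero => simp
    | add x y hx hy => simp only [map_add, hx, hy]
    | tmul n h => simp
  have h2 : ∀ w, TensorProduct.rid k (N ⊗[k] H) (D.ε.lTensor (N ⊗[k] H)
      ((TensorProduct.assoc k N H H).symm w)) =
      ((TensorProduct.rid k H).toLinearMap ∘ₗ D.ε.lTensor H).lTensor N w := by
    have : (TensorProduct.rid k (N ⊗[k] H)).toLinearMap ∘ₗ (D.ε.lTensor (N ⊗[k] H)) ∘ₗ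
      (TensorProduct.assoc k N H H).symm.toLinearMap =
      ((TensorProduct.rid k H).toLinearMap ∘ₗ D.ε.lTensor H).lTensor N := by
      ext n x y
      simp [TensorProduct.smul_tmul']
    exact fun w => LinearMap.congr_fun this w
  rw [h1, sub_eq_zero.1 hw, h2]
  have : ∀ u, (((TensorProduct.rid k H).toLinearMap ∘ₗ D.ε.lTensor H).lTensor N)
      (D.Δ.lTensor N u) = u := by
    intro u
    induction u with
    | zero => simp
    | add x y hx hy => simp only [map_add, hx, hy]
    | tmul n h => simp [D.counit_right]
  exact this w

theorem HMod.can_coact (P : HMod D N) {n : N} (h : P.coact n = n ⊗ₜ D.oH) (a : A) :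
    D.can P.act (n ⊗ₜ a) = P.coact (P.act n a) := by
  rw [P.compat, h, map₂_tmul_left _ _ _ _ D.oH_mul, UD.can_tmul]

end HomDT
end


noncomputable section
namespace HomDT

variable {k : Type} [Field k] {H A : Type} [AddCommGroup H] [Module k H]
    [AddCommGroup A] [Module k A]
variable {D : UD k H A}
variable {M N : Type} [AddCommGroup M] [Module k M] [AddCommGroup N] [Module k N]

/-- The induced space `M ⊗_B A`. -/
abbrev BMod.X (T : BMod D M) : Type := (M ⊗[k] A) ⧸ D.rel T.act

/-- The map `a ↦ m ⊗ a`. -/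
def BMod.i (T : BMod D M) (m : M) : A →ₗ[k] T.X :=
  (D.rel T.act).mkQ ∘ₗ TensorProduct.mk k M A m

theorem BMod.i_apply (T : BMod D M) (m : M) (a : A) :
    T.i m a = (D.rel T.act).mkQ (m ⊗ₜ a) := rfl

theorem BMod.i_bal (T : BMod D M) (m : M) {b : A} (hb : b ∈ D.B) (a : A) :
    T.i (T.act m b) a = T.i m (D.mA b a) := by
  rw [BMod.i_apply, BMod.i_apply, ← sub_eq_zero, ← map_sub]
  exact (Submodule.Quotient.mk_eq_zero _).2 (D.mem_rel _ _ _ hb)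

theorem BMod.i_add (T : BMod D M) (m n : M) : T.i (m + n) = T.i m + T.i n := by
  ext a; simp [BMod.i_apply, TensorProduct.add_tmul]

theorem BMod.i_smul (T : BMod D M) (c : k) (m : M) : T.i (c • m) = c • T.i m := by
  ext a
  rw [BMod.i_apply, ← TensorProduct.smul_tmul', map_smul]
  rfl

theorem BMod.X_ind (T : BMod D M) {p : T.X → Prop} (hz : p 0) (hi : ∀ m a, p (T.i m a))
    (ha : ∀ x y, p x → p y → p (x + y)) (x : T.X) : p x := by
  obtain ⟨z, rfl⟩ := (D.rel T.act).mkQ_surjective x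
  induction z with
  | zero => simpa using hz
  | add x y hx hy => rw [map_add]; exact ha _ _ hx hy
  | tmul m a => exact hi m a

/-- Linear maps out of `M ⊗_B A`. -/
def BMod.lift (T : BMod D M) (f : M →ₗ[k] A →ₗ[k] N)
    (hf : ∀ m a b, b ∈ D.B → f (T.act m b) a = f m (D.mA b a)) : T.X →ₗ[k] N :=
  (D.rel T.act).liftQ (TensorProduct.lift f) (by
    apply D.rel_le
    intro m a b hb
    simp [hf m a b hb])

theorem BMod.lift_i (T : BMod D M) (f : M →ₗ[k] A →ₗ[k] N)
    (hf : ∀ m a b, b ∈ D.B → f (T.act m b) a = f m (D.mA b a)) (m : M) (a : A) :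
    T.lift f hf (T.i m a) = f m a := by
  simp [BMod.lift, BMod.i_apply]

/-- action on the induced module -/
def BMod.actX (T : BMod D M) : T.X →ₗ[k] A →ₗ[k] T.X :=
  T.lift (LinearMap.mk₂ k (fun m a => T.i m ∘ₗ D.mA a)
      (by intros; simp [BMod.i_add, LinearMap.add_comp])
      (by intros; simp [BMod.i_smul, LinearMap.smul_comp])
      (by intros; simp [LinearMap.comp_add])
      (by intros; simp [LinearMap.comp_smul]))
    (by
      intro m a b hb
      ext c
      simp only [LinearMap.mk₂_apply, LinearMap.comp_apply]
      rw [T.i_bal m hb, D.mA_assoc])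

@[simp] theorem BMod.actX_i (T : BMod D M) (m : M) (a b : A) :
    T.actX (T.i m a) b = T.i m (D.mA a b) := by
  simp [BMod.actX, BMod.lift_i]

/-- coaction on the induced module -/
def BMod.coactX (T : BMod D M) : T.X →ₗ[k] T.X ⊗[k] H :=
  T.lift (LinearMap.mk₂ k (fun m a => (T.i m).rTensor H (D.ρ a))
      (by intros; simp [BMod.i_add, LinearMap.rTensor_add])
      (by intros; simp [BMod.i_smul, LinearMap.rTensor_smul])
      (by intros; simp)
      (by intros; simp))
    (by
      intro m a b hb
      simp only [LinearMap.mk₂_apply]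
      rw [D.ρ_bmul hb, rTensor_rTensor]
      congr 2
      ext c
      exact T.i_bal m hb c)

@[simp] theorem BMod.coactX_i (T : BMod D M) (m : M) (a : A) :
    T.coactX (T.i m a) = (T.i m).rTensor H (D.ρ a) := by
  simp [BMod.coactX, BMod.lift_i]

theorem BMod.coactX_comp (T : BMod D M) (m : M) :
    T.coactX ∘ₗ T.i m = (T.i m).rTensor H ∘ₗ D.ρ := by
  ext a; simp

/-- functoriality for maps which are semilinear along `β`-type maps -/
def BMod.autX₀ (T : BMod D M) : T.X →ₗ[k] T.X :=
  T.lift (LinearMap.mk₂ k (fun m a => T.i (T.aut m) (D.β a))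
      (by intros; simp [BMod.i_add]) (by intros; simp [BMod.i_smul])
      (by intros; simp) (by intros; simp))
    (by
      intro m a b hb
      simp only [LinearMap.mk₂_apply]
      rw [T.aut_act m b hb, T.i_bal _ (D.β_B hb), D.β_mul])

theorem UD.β_symm_mul (D : UD k H A) (a b : A) :
    D.β.symm (D.mA a b) = D.mA (D.β.symm a) (D.β.symm b) := by
  rw [LinearEquiv.symm_apply_eq, D.β_mul]; simp

theorem UD.β_symm_B (D : UD k H A) {a : A} (ha : a ∈ D.B) : D.β.symm a ∈ D.B := by
  rw [UD.mem_B] at *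
  apply (TensorProduct.congr D.β D.α).injective
  have := D.ρ_β (D.β.symm a)
  rw [LinearEquiv.apply_symm_apply, ha] at this
  rw [TensorProduct.congr_tmul, D.α_one, LinearEquiv.apply_symm_apply]
  exact this.symm

theorem BMod.aut_symm_act (T : BMod D M) (m : M) {b : A} (hb : b ∈ D.B) :
    T.aut.symm (T.act m b) = T.act (T.aut.symm m) (D.β.symm b) := by
  rw [LinearEquiv.symm_apply_eq, T.aut_act _ _ (D.β_symm_B hb)]; simp

def BMod.autX₁ (T : BMod D M) : T.X →ₗ[k] T.X :=
  T.lift (LinearMap.mk₂ k (fun m a => T.i (T.aut.symm m) (D.β.symm a))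
      (by intros; simp [BMod.i_add]) (by intros; simp [BMod.i_smul])
      (by intros; simp) (by intros; simp))
    (by
      intro m a b hb
      simp only [LinearMap.mk₂_apply]
      rw [T.aut_symm_act m hb, T.i_bal _ (D.β_symm_B hb), D.β_symm_mul])

theorem BMod.autX₀_i (T : BMod D M) (m : M) (a : A) :
    T.autX₀ (T.i m a) = T.i (T.aut m) (D.β a) := by
  simp [BMod.autX₀, BMod.lift_i]

theorem BMod.autX₁_i (T : BMod D M) (m : M) (a : A) :
    T.autX₁ (T.i m a) = T.i (T.aut.symm m) (D.β.symm a) := by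
  simp [BMod.autX₁, BMod.lift_i]

def BMod.autX (T : BMod D M) : T.X ≃ₗ[k] T.X :=
  LinearEquiv.ofLinearMap T.autX₀ T.autX₁
    (by
      refine LinearMap.ext fun x => ?_
      induction x using T.X_ind with
      | hz => simp
      | ha x y hx hy => simp only [map_add, hx, hy]
      | hi m c => simp [BMod.autX₁_i, BMod.autX₀_i])
    (by
      refine LinearMap.ext fun x => ?_
      induction x using T.X_ind with
      | hz => simp
      | ha x y hx hy => simp only [map_add, hx, hy]
      | hi m c => simp [BMod.autX₁_i, BMod.autX₀_i])

@[simp] theorem BMod.autX_i (T : BMod D M) (m : M) (a : A) :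
    T.autX (T.i m a) = T.i (T.aut m) (D.β a) := T.autX₀_i m a

/-- The induced Hopf module. -/
def BMod.F (T : BMod D M) : HMod D T.X where
  act := T.actX
  aut := T.autX
  act_act := by
    intro n a b
    induction n using T.X_ind with
    | hz => simp
    | ha x y hx hy => simp only [map_add, LinearMap.add_apply, hx, hy]
    | hi m c => simp [D.mA_assoc]
  act_one := by
    intro n
    induction n using T.X_ind with
    | hz => simp
    | ha x y hx hy => simp only [map_add, LinearMap.add_apply, hx, hy]
    | hi m c => simp [D.mul_oA]
  aut_act := by
    intro n a
    induction n using T.X_ind with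
    | hz => simp
    | ha x y hx hy => simp only [map_add, LinearMap.add_apply, hx, hy]
    | hi m c => simp [D.β_mul]
  coact := T.coactX
  coassoc := by
    intro n
    induction n using T.X_ind with
    | hz => simp
    | ha x y hx hy => simp only [map_add, hx, hy]
    | hi m c =>
      rw [T.coactX_i, rTensor_rTensor, T.coactX_comp, ← rTensor_rTensor, assoc_rTensor,
        lTensor_rTensor, D.coassoc]
  counit := by
    intro n
    induction n using T.X_ind with
    | hz => simp
    | ha x y hx hy => simp only [map_add, hx, hy]
    | hi m c =>
      rw [T.coactX_i, lTensor_rTensor]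
      have : ∀ z : A ⊗[k] k, TensorProduct.rid k T.X ((T.i m).rTensor k z) =
          T.i m (TensorProduct.rid k A z) := by
        intro z
        induction z with
        | zero => simp
        | add x y hx hy => simp only [map_add, hx, hy]
        | tmul a c => simp
      rw [this, D.counit]
  coact_aut := by
    intro n
    induction n using T.X_ind with
    | hz => simp
    | ha x y hx hy => simp only [map_add, hx, hy]
    | hi m c =>
      rw [T.autX_i, T.coactX_i, T.coactX_i, D.ρ_β]
      generalize D.ρ c = u
      induction u with
      | zero => simp
      | add x y hx hy => simp only [map_add, hx, hy]
      | tmul a h => simp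
  compat := by
    intro n a
    induction n using T.X_ind with
    | hz => simp
    | ha x y hx hy => simp only [map_add, LinearMap.add_apply, hx, hy]
    | hi m c =>
      rw [T.actX_i, T.coactX_i, T.coactX_i, D.ρ_mul]
      generalize D.ρ c = u
      generalize D.ρ a = v
      induction u with
      | zero => simp
      | add x y hx hy => simp only [map_add, LinearMap.add_apply, hx, hy]
      | tmul a h =>
        induction v with
        | zero => simp
        | add x y hx hy => simp only [map_add, hx, hy]
        | tmul b g => simp

theorem BMod.F_act (T : BMod D M) : T.F.act = T.actX := rfl
theorem BMod.F_coact (T : BMod D M) : T.F.coact = T.coactX := rfl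

/-- The unit. -/
def BMod.η (T : BMod D M) : M →ₗ[k] T.X :=
  (D.rel T.act).mkQ ∘ₗ (TensorProduct.mk k M A).flip D.oA

theorem BMod.η_apply (T : BMod D M) (m : M) : T.η m = T.i m D.oA := rfl

theorem BMod.η_coinv (T : BMod D M) (m : M) : T.coactX (T.η m) = T.η m ⊗ₜ D.oH := by
  rw [T.η_apply, T.coactX_i, D.ρ_one]; simp

theorem BMod.η_act (T : BMod D M) (m : M) {b : A} (hb : b ∈ D.B) :
    T.η (T.act m b) = T.actX (T.η m) b := by
  rw [T.η_apply, T.η_apply, T.i_bal _ hb, T.actX_i, D.mul_oA, D.oA_mul]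

/-- morphisms -/
def BMod.IsHom {M₁ M₂ : Type} [AddCommGroup M₁] [Module k M₁] [AddCommGroup M₂] [Module k M₂]
    (T₁ : BMod D M₁) (T₂ : BMod D M₂) (f : M₁ →ₗ[k] M₂) : Prop :=
  (∀ m, ∀ b ∈ D.B, f (T₁.act m b) = T₂.act (f m) b) ∧ ∀ m, f (T₁.aut m) = T₂.aut (f m)

/-- Faithful flatness, in a form without quotients. -/
def UD.FF (D : UD k H A) : Prop :=
  ∀ (M₁ M₂ M₃ : Type) [AddCommGroup M₁] [Module k M₁] [AddCommGroup M₂] [Module k M₂]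
    [AddCommGroup M₃] [Module k M₃] (T₁ : BMod D M₁) (T₂ : BMod D M₂) (T₃ : BMod D M₃)
    (f : M₁ →ₗ[k] M₂) (g : M₂ →ₗ[k] M₃), T₁.IsHom T₂ f → T₂.IsHom T₃ g →
    (LinearMap.range f = LinearMap.ker g ↔
      ∀ x, g.rTensor A x ∈ D.rel T₃.act ↔ ∃ y, x - f.rTensor A y ∈ D.rel T₂.act)

/-- The zero module. -/
def UD.zeroMod (D : UD k H A) : BMod D PUnit where
  act := 0
  aut := LinearEquiv.refl k _
  act_act := by intros; rfl
  act_one := by intros; rfl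
  aut_act := by intros; rfl

theorem range_eq_ker_of {M₁ M₂ M₃ : Type} [AddCommGroup M₁] [Module k M₁] [AddCommGroup M₂]
    [Module k M₂] [AddCommGroup M₃] [Module k M₃] (f : M₁ →ₗ[k] M₂) (g : M₂ →ₗ[k] M₃) :
    LinearMap.range f = LinearMap.ker g ↔ ∀ x, g x = 0 ↔ ∃ y, x = f y := by
  constructor
  · intro h x
    rw [← LinearMap.mem_ker, ← h, LinearMap.mem_range]
    simp only [eq_comm]
  · intro h
    ext x
    rw [LinearMap.mem_ker, h, LinearMap.mem_range]
    simp only [eq_comm]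

/-- Consequence of faithful flatness: preservation and reflection of injectivity. -/
theorem UD.FF.inj (hF : D.FF) {M₁ M₂ : Type} [AddCommGroup M₁] [Module k M₁] [AddCommGroup M₂]
    [Module k M₂] (T₁ : BMod D M₁) (T₂ : BMod D M₂) (f : M₁ →ₗ[k] M₂) (hf : T₁.IsHom T₂ f) :
    (∀ m, f m = 0 → m = 0) ↔ ∀ x, f.rTensor A x ∈ D.rel T₂.act → x ∈ D.rel T₁.act := by
  have := hF PUnit M₁ M₂ D.zeroMod T₁ T₂ 0 f ⟨by intros; simp, by intros; simp⟩ hf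
  rw [range_eq_ker_of] at this
  simp only [LinearMap.zero_apply, LinearMap.rTensor_zero, sub_zero, exists_const] at this
  constructor
  · intro h x hx
    exact (this.1 (fun m => ⟨h m, fun e => by simp [e]⟩) x).1 hx
  · intro h m hm
    exact (this.2 (fun x => ⟨h x, fun e => D.rel_map _ _ f hf.1 e⟩) m).1 hm

/-- The unit is bijective onto coinvariants. -/
def BMod.UnitBij (T : BMod D M) : Prop :=
  (∀ m, T.η m = 0 → m = 0) ∧ ∀ x, T.coactX x = x ⊗ₜ D.oH → ∃ m, T.η m = x

/-- counit before passing to the quotient -/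
def HMod.counitMap (P : HMod D N) (Nc : Submodule k N) : Nc ⊗[k] A →ₗ[k] N :=
  TensorProduct.lift (P.act ∘ₗ Nc.subtype)

@[simp] theorem HMod.counitMap_tmul (P : HMod D N) (Nc : Submodule k N) (n : Nc) (a : A) :
    P.counitMap Nc (n ⊗ₜ a) = P.act n a := rfl

/-- relations for the counit -/
def HMod.relC (_P : HMod D N) (Nc : Submodule k N) : Submodule k (Nc ⊗[k] A) :=
  Submodule.span k {x | ∃ (n n' : Nc) (a b : A), b ∈ D.B ∧ (n' : N) = _P.act n b ∧
    x = n' ⊗ₜ[k] a - n ⊗ₜ[k] D.mA b a}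

/-- The counit is bijective. -/
def HMod.CounitBij (P : HMod D N) (Nc : Submodule k N) : Prop :=
  Function.Surjective (P.counitMap Nc) ∧ ∀ y, P.counitMap Nc y = 0 → y ∈ P.relC Nc

theorem unit_of_FF (hF : D.FF) (hG : D.Galois) (T : BMod D M) : T.UnitBij := by
  have hη : T.IsHom T.F.toB T.η := by
    refine ⟨fun m b hb => T.η_act m hb, fun m => ?_⟩
    change T.η (T.aut m) = T.autX (T.η m)
    rw [T.η_apply, T.η_apply, T.autX_i, D.β_one]
  have hd : T.F.toB.IsHom T.F.diag.toB T.F.d :=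
    ⟨fun m b hb => T.F.d_act m hb, fun m => T.F.d_aut m⟩
  have key : ∀ x, D.can T.actX (T.η.rTensor A x) = T.coactX ((D.rel T.act).mkQ x) := by
    intro x
    induction x with
    | zero => simp
    | add x y hx hy => simp only [map_add, hx, hy]
    | tmul m a =>
      rw [LinearMap.rTensor_tmul, UD.can_tmul, ← T.i_apply, T.coactX_i]
      congr 2
      ext c
      rw [T.η_apply, T.actX_i, D.oA_mul]
  constructor
  · rw [hF.inj T T.F.toB T.η hη]
    intro x hx
    have h0 : D.can T.actX (T.η.rTensor A x) = 0 := T.F.can_rel hx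
    rw [key] at h0
    exact (Submodule.Quotient.mk_eq_zero _).1 (T.F.coact_inj h0)
  · have := (hF _ _ _ T T.F.toB T.F.diag.toB T.η T.F.d hη hd).2 ?_
    · rw [range_eq_ker_of] at this
      intro x hx
      obtain ⟨m, hm⟩ := (this x).1 (by rw [HMod.d_apply, T.F_coact, hx, sub_self])
      exact ⟨m, hm.symm⟩
    · intro x
      constructor
      · intro hx
        have h0 := T.F.diag.can_rel hx
        rw [T.F.can_d] at h0
        have h1 := T.F.exact_coact _ h0
        generalize (TensorProduct.rid k T.X) (D.ε.lTensor T.X (D.can T.F.act x)) = w at h1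
        obtain ⟨y, rfl⟩ := (D.rel T.act).mkQ_surjective w
        refine ⟨y, (T.F.can_galois hG).2 _ ?_⟩
        rw [map_sub, ← h1, sub_eq_zero]
        exact (key y).symm
      · rintro ⟨y, hy⟩
        have h1 := D.rel_map T.F.act T.F.diag.act T.F.d (fun m b hb => T.F.d_act m hb) hy
        rw [map_sub, rTensor_rTensor] at h1
        have : T.F.d ∘ₗ T.η = 0 := by
          ext m
          simp [HMod.d_apply, T.F_coact, T.η_coinv]
        rw [this, LinearMap.rTensor_zero, LinearMap.zero_apply] at h1
        exact (sub_zero (T.F.d.rTensor A x)) ▸ h1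

/-- Coinvariants form a `B`-module. -/
theorem HMod.exists_coinvMod (P : HMod D N) (Nc : Submodule k N)
    (hN : ∀ n, n ∈ Nc ↔ P.coact n = n ⊗ₜ D.oH) :
    ∃ T : BMod D Nc, (∀ n : Nc, ∀ b ∈ D.B, (T.act n b : N) = P.act n b) ∧
      ∀ n, (T.aut n : N) = P.aut n := by
  obtain ⟨p, hp, hp'⟩ := D.exists_proj
  have hmem : ∀ n ∈ Nc, ∀ b ∈ D.B, P.act n b ∈ Nc := by
    intro n hn b hb
    rw [hN] at *
    rw [P.compat, hn, D.mem_B.1 hb, TensorProduct.map₂_apply_tmul, TensorProduct.map_tmul,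
      D.mul_oH]
  have haut : ∀ n, n ∈ Nc ↔ P.aut n ∈ Nc := by
    intro n
    rw [hN, hN, P.coact_aut]
    have : P.aut n ⊗ₜ[k] D.oH = TensorProduct.congr P.aut D.α (n ⊗ₜ D.oH) := by simp [D.α_one]
    rw [this]
    exact ((TensorProduct.congr P.aut D.α).injective.eq_iff (a := P.coact n)).symm
  have haut' : Nc.map (P.aut : N →ₗ[k] N) = Nc := by
    ext n
    constructor
    · rintro ⟨m, hm, rfl⟩
      exact (haut m).1 hm
    · intro hn
      exact ⟨P.aut.symm n, (haut _).2 (by simpa using hn), by simp⟩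
  let T : BMod D Nc :=
    { act := LinearMap.mk₂ k (fun n a => ⟨P.act n (p a), hmem n n.2 _ (hp a)⟩)
        (by intros; ext; simp) (by intros; ext; simp) (by intros; ext; simp)
        (by intros; ext; simp)
      aut := P.aut.ofSubmodules Nc Nc haut'
      act_act := by
        intro n a ha b hb
        ext
        simp [hp' a ha, hp' b hb, hp' _ (D.mul_B ha hb), P.act_act]
      act_one := by
        intro n
        ext
        simp [hp' _ D.one_B, P.act_one]
      aut_act := by
        intro n a ha
        ext
        simp [hp' _ ha, hp' _ (D.β_B ha), P.aut_act] }
  refine ⟨T, ?_, ?_⟩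
  · intro n b hb
    simp [T, hp' b hb]
  · intro n; simp [T]

theorem counit_of_FF (hF : D.FF) (hG : D.Galois) (P : HMod D N) (Nc : Submodule k N)
    (hN : ∀ n, n ∈ Nc ↔ P.coact n = n ⊗ₜ D.oH) : P.CounitBij Nc := by
  obtain ⟨T, hT, hT'⟩ := P.exists_coinvMod Nc hN
  have hi : T.IsHom P.toB Nc.subtype := ⟨hT, hT'⟩
  have hd : P.toB.IsHom P.diag.toB P.d :=
    ⟨fun m b hb => P.d_act m hb, fun m => P.d_aut m⟩
  have key : ∀ y, D.can P.act (Nc.subtype.rTensor A y) = P.coact (P.counitMap Nc y) := by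
    intro x
    induction x with
    | zero => simp
    | add x y hx hy => simp only [map_add, hx, hy]
    | tmul n a =>
      rw [LinearMap.rTensor_tmul, P.counitMap_tmul]
      exact P.can_coact ((hN n).1 n.2) a
  constructor
  · intro n
    obtain ⟨x, hx⟩ := (P.can_galois hG).1 (P.coact n)
    have hex := (hF _ _ _ T P.toB P.diag.toB Nc.subtype P.d hi hd).1 (by
      rw [range_eq_ker_of]
      intro x
      rw [P.d_apply, sub_eq_zero, ← hN]
      simp)
    obtain ⟨y, hy⟩ := (hex x).1 ((P.diag.can_galois hG).2 _ (by
      rw [P.can_d, hx, ← P.coassoc]; simp))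
    refine ⟨y, ?_⟩
    have h1 := P.can_rel hy
    rw [map_sub, key, hx, ← map_sub] at h1
    exact (sub_eq_zero.1 (P.coact_inj h1)).symm
  · intro y hy
    have h1 := (hF.inj T P.toB Nc.subtype hi).1 (by simp) y ((P.can_galois hG).2 _ (by
      rw [key, hy, map_zero]))
    have : D.rel T.act ≤ P.relC Nc := by
      apply D.rel_le
      intro m a b hb
      exact Submodule.subset_span ⟨m, _, a, b, hb, hT m b hb, rfl⟩
    exact this h1

end HomDT
end


noncomputable section
namespace HomDT

variable {k : Type} [Field k] {H A : Type} [AddCommGroup H] [Module k H]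
    [AddCommGroup A] [Module k A]
variable {D : UD k H A}
variable {M N : Type} [AddCommGroup M] [Module k M] [AddCommGroup N] [Module k N]

/-- coaction on `A ⊗ H` -/
def UD.coactAH (D : UD k H A) : A ⊗[k] H →ₗ[k] (A ⊗[k] H) ⊗[k] H :=
  TensorProduct.lift (LinearMap.mk₂ k (fun a h => (TensorProduct.mk k A H a).rTensor H (D.Δ h))
    (by intros; simp [LinearMap.rTensor_add]) (by intros; simp [LinearMap.rTensor_smul])
    (by intros; simp) (by intros; simp))

@[simp] theorem UD.coactAH_tmul (D : UD k H A) (a : A) (h : H) :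
    D.coactAH (a ⊗ₜ h) = (TensorProduct.mk k A H a).rTensor H (D.Δ h) := rfl

theorem UD.coactAH_comp (D : UD k H A) (a : A) :
    D.coactAH ∘ₗ TensorProduct.mk k A H a = (TensorProduct.mk k A H a).rTensor H ∘ₗ D.Δ := by
  ext h; simp

theorem AH_compat_aux (D : UD k H A) (a : A) (t : H ⊗[k] H) (v : (A ⊗[k] H) ⊗[k] H) :
    TensorProduct.assoc k A H H (TensorProduct.map₂ (TensorProduct.map₂ D.mA D.mH) D.mH
      ((TensorProduct.mk k A H a).rTensor H t) v) =
      TensorProduct.map (D.mA a) (TensorProduct.map₂ D.mH D.mH t)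
        (TensorProduct.assoc k A H H v) := by
  induction v with
  | zero => simp
  | add x y hx hy => simp only [map_add, hx, hy]
  | tmul v w =>
    induction v with
    | zero => simp
    | add x y hx hy =>
      simp only [map_add, TensorProduct.add_tmul, hx, hy]
    | tmul b g =>
      induction t with
      | zero => simp
      | add x y hx hy =>
        simp only [map_add, LinearMap.add_apply, hx, hy, TensorProduct.assoc_tmul,
          TensorProduct.map_tmul, TensorProduct.tmul_add]
      | tmul x y => simp

theorem map₂_compl (f : M →ₗ[k] N →ₗ[k] M) (r : A →ₗ[k] N) (g : H →ₗ[k] H →ₗ[k] H)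
    (t : M ⊗[k] H) (u : A ⊗[k] H) :
    TensorProduct.map₂ (f.compl₂ r) g t u = TensorProduct.map₂ f g t (r.rTensor H u) := by
  induction u with
  | zero => simp
  | add x y hx hy => simp only [map_add, hx, hy]
  | tmul a h =>
    induction t with
    | zero => simp
    | add x y hx hy => simp only [map_add, LinearMap.add_apply, hx, hy]
    | tmul m n => simp

/-- `A ⊗ H` as a Hopf module. -/
def UD.AH (D : UD k H A) : HMod D (A ⊗[k] H) where
  toAMod := D.reg.diag
  coact := D.coactAH
  coassoc := by
    intro n
    induction n with
    | zero => simp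
    | add x y hx hy => simp only [map_add, hx, hy]
    | tmul a h =>
      rw [D.coactAH_tmul, rTensor_rTensor, D.coactAH_comp, ← rTensor_rTensor, assoc_rTensor,
        lTensor_rTensor, D.coassocH]
  counit := by
    intro n
    induction n with
    | zero => simp
    | add x y hx hy => simp only [map_add, hx, hy]
    | tmul a h =>
      rw [D.coactAH_tmul, lTensor_rTensor]
      have : ∀ z : H ⊗[k] k, TensorProduct.rid k (A ⊗[k] H)
          ((TensorProduct.mk k A H a).rTensor k z) = a ⊗ₜ (TensorProduct.rid k H z) := by
        intro z
        induction z with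
        | zero => simp
        | add x y hx hy => simp only [map_add, hx, hy, TensorProduct.tmul_add]
        | tmul a c => simp
      rw [this, D.counit_right]
  coact_aut := by
    intro n
    induction n with
    | zero => simp
    | add x y hx hy => simp only [map_add, hx, hy]
    | tmul a h =>
      change D.coactAH (D.β a ⊗ₜ D.α h) = _
      rw [D.coactAH_tmul, D.coactAH_tmul, D.Δ_α]
      generalize D.Δ h = u
      induction u with
      | zero => simp
      | add x y hx hy => simp only [map_add, hx, hy]
      | tmul x y => 
        simp only [TensorProduct.map_tmul, LinearMap.rTensor_tmul, TensorProduct.mk_apply]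
        rfl
  compat := by
    intro n c
    induction n with
    | zero => simp
    | add x y hx hy => simp only [map_add, LinearMap.add_apply, hx, hy]
    | tmul a h =>
      change D.coactAH (TensorProduct.map₂ D.mA D.mH (a ⊗ₜ h) (D.ρ c)) =
        TensorProduct.map₂ ((TensorProduct.map₂ D.mA D.mH).compl₂ D.ρ) D.mH _ _
      rw [map₂_compl, D.coactAH_tmul]
      apply (TensorProduct.assoc k A H H).injective
      rw [AH_compat_aux, D.coassoc]
      generalize D.ρ c = u
      induction u with
      | zero => simp
      | add x y hx hy => simp only [map_add, hx, hy]
      | tmul b g =>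
        rw [TensorProduct.map₂_apply_tmul, TensorProduct.map_tmul, D.coactAH_tmul, D.Δ_mul,
          LinearMap.lTensor_tmul, TensorProduct.map_tmul]
        generalize TensorProduct.map₂ D.mH D.mH (D.Δ h) (D.Δ g) = z
        induction z with
        | zero => simp
        | add x y hx hy => simp only [map_add, hx, hy, TensorProduct.tmul_add]
        | tmul x y => simp

theorem galois_of_counit
    (hC : ∀ (N : Type) [AddCommGroup N] [Module k N] (P : HMod D N), ∃ Nc : Submodule k N,
      (∀ n, n ∈ Nc ↔ P.coact n = n ⊗ₜ D.oH) ∧ P.CounitBij Nc) : D.Galois := by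
  obtain ⟨Nc, hN, hs, hi⟩ := hC _ D.AH
  let e : A ⊗[k] H →ₗ[k] A := (TensorProduct.rid k A).toLinearMap ∘ₗ D.ε.lTensor A
  have he : ∀ a h, e (a ⊗ₜ h) = D.ε h • a := fun a h => by simp [e]
  have hco : ∀ w, w ∈ Nc → w = e w ⊗ₜ D.oH := by
    intro w hw
    rw [hN] at hw
    change D.coactAH w = _ at hw
    have h1 : ∀ w, e.rTensor H (D.coactAH w) = w := by
      intro w
      induction w with
      | zero => simp
      | add x y hx hy => simp only [map_add, hx, hy]
      | tmul a h =>
        rw [D.coactAH_tmul, rTensor_rTensor]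
        conv_rhs => rw [← D.counit_left h]
        generalize D.Δ h = u
        induction u with
        | zero => simp
        | add x y hx hy => simp only [map_add, hx, hy, TensorProduct.tmul_add]
        | tmul x y =>
          simp [he]
          rfl
    have := h1 w
    rw [hw, LinearMap.rTensor_tmul] at this
    exact this.symm
  have hco' : ∀ a, a ⊗ₜ D.oH ∈ Nc := by
    intro a
    rw [hN]
    change D.coactAH _ = _
    rw [D.coactAH_tmul, D.Δ_one]
    simp
  let c : A →ₗ[k] Nc := ((TensorProduct.mk k A H).flip D.oH).codRestrict Nc hco'
  have hc : ∀ a, (c a : A ⊗[k] H) = a ⊗ₜ D.oH := fun a => rfl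
  have key : ∀ z, D.AH.counitMap Nc (c.rTensor A z) = D.can D.mA z := by
    intro z
    induction z with
    | zero => simp
    | add x y hx hy => simp only [map_add, hx, hy]
    | tmul a b =>
      rw [LinearMap.rTensor_tmul, HMod.counitMap_tmul, hc, UD.can_tmul]
      exact D.reg.diag_act_one a b
  have hec : (e ∘ₗ Nc.subtype) ∘ₗ c = LinearMap.id := by
    ext a
    simp [hc, he, D.ε_one]
  have hce : c ∘ₗ (e ∘ₗ Nc.subtype) = LinearMap.id := by
    ext w
    simp only [LinearMap.comp_apply, hc, Submodule.subtype_apply, LinearMap.id_apply]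
    exact (hco w w.2).symm
  constructor
  · intro w
    obtain ⟨y, hy⟩ := hs w
    refine ⟨(e ∘ₗ Nc.subtype).rTensor A y, ?_⟩
    rw [← key, rTensor_rTensor, hce]
    simpa using hy
  · intro z hz
    have h1 := hi _ ((key z).trans hz)
    have h2 : D.AH.relC Nc ≤ (D.rel D.mA).comap ((e ∘ₗ Nc.subtype).rTensor A) := by
      refine Submodule.span_le.2 ?_
      rintro x ⟨n, n', a, b, hb, hn, rfl⟩
      have : e n' = D.mA (e n) b := by
        rw [hn, hco n n.2]
        have : D.AH.act (e n ⊗ₜ D.oH) b = _ := D.reg.diag_act_one (e n) b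
        rw [this, D.mem_B.1 hb, LinearMap.rTensor_tmul, he, he, D.ε_one]
        simp [UD.reg]
      simp only [SetLike.mem_coe, Submodule.mem_comap, map_sub, LinearMap.rTensor_tmul,
        LinearMap.comp_apply, Submodule.subtype_apply]
      rw [this]
      exact D.mem_rel _ _ _ hb
    have h3 := h2 h1
    rw [Submodule.mem_comap, rTensor_rTensor, hec] at h3
    simpa using h3

/-- Kernels of Hopf module maps are Hopf modules. -/
theorem HMod.exists_ker {Y : Type} [AddCommGroup Y] [Module k Y] (P : HMod D N) (Q : HMod D Y)
    (G : N →ₗ[k] Y) (hact : ∀ n a, G (P.act n a) = Q.act (G n) a)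
    (haut : ∀ n, G (P.aut n) = Q.aut (G n))
    (hco : ∀ n, Q.coact (G n) = G.rTensor H (P.coact n)) :
    ∃ R : HMod D (LinearMap.ker G),
      (∀ (n : LinearMap.ker G) a, (R.act n a : N) = P.act n a) ∧
      ∀ n : LinearMap.ker G, (LinearMap.ker G).subtype.rTensor H (R.coact n) = P.coact n := by
  set K := LinearMap.ker G with hK
  obtain ⟨r, hr⟩ := LinearMap.exists_leftInverse_of_injective K.subtype (by simp)
  have hmem : ∀ n ∈ K, ∀ b, P.act n b ∈ K := by
    intro n hn b
    rw [hK, LinearMap.mem_ker] at *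
    rw [hact, hn]; simp
  have haut' : K.map (P.aut : N →ₗ[k] N) = K := by
    ext n
    constructor
    · rintro ⟨m, hm, rfl⟩
      have hm : G m = 0 := hm
      change G (P.aut m) = 0
      rw [haut, hm, map_zero]
    · intro hn
      have hn : G n = 0 := hn
      refine ⟨P.aut.symm n, ?_, by simp⟩
      change G _ = 0
      apply Q.aut.injective
      rw [← haut]
      simpa using hn
  have hsub : ∀ n : K, ∃ w, K.subtype.rTensor H w = P.coact n := by
    intro n
    have hex : Function.Exact (K.subtype.rTensor H) (G.rTensor H) :=
      Module.Flat.rTensor_exact H (LinearMap.exact_subtype_ker_map G)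
    refine (hex _).1 ?_
    rw [← hco]
    have : G n = 0 := n.2
    rw [this, map_zero]
  let co : K →ₗ[k] K ⊗[k] H := r.rTensor H ∘ₗ P.coact ∘ₗ K.subtype
  have hcoK : ∀ n : K, K.subtype.rTensor H (co n) = P.coact n := by
    intro n
    obtain ⟨w, hw⟩ := hsub n
    simp only [co, LinearMap.comp_apply, Submodule.subtype_apply]
    rw [← hw, rTensor_rTensor K.subtype r w, hr, LinearMap.rTensor_id, LinearMap.id_apply]
  have hcoK' : K.subtype.rTensor H ∘ₗ co = P.coact ∘ₗ K.subtype := LinearMap.ext hcoK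
  have inj : ∀ V : Type, ∀ [AddCommGroup V] [Module k V],
      Function.Injective (K.subtype.rTensor V) := fun V _ _ =>
    Module.Flat.rTensor_preserves_injective_linearMap _ K.injective_subtype
  let actK : K →ₗ[k] A →ₗ[k] K := LinearMap.mk₂ k (fun n a => ⟨P.act n a, hmem n n.2 a⟩)
        (by intros; ext; simp) (by intros; ext; simp) (by intros; ext; simp)
        (by intros; ext; simp)
  have hactK : ∀ n a, (actK n a : N) = P.act n a := fun _ _ => rfl
  let R : HMod D K :=
    { act := actK
      aut := P.aut.ofSubmodules K K haut'
      act_act := by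
        intro n a b
        ext
        simp [hactK, P.act_act]
      act_one := by
        intro n
        ext
        simp [hactK, P.act_one]
      aut_act := by
        intro n a
        ext
        simp [hactK, P.aut_act]
      coact := co
      coassoc := by
        intro n
        apply inj
        rw [← assoc_rTensor, rTensor_rTensor, hcoK', ← rTensor_rTensor, hcoK, ← lTensor_rTensor,
          hcoK, P.coassoc]
      counit := by
        intro n
        apply K.injective_subtype
        have h1 : ∀ z : K ⊗[k] k, K.subtype (TensorProduct.rid k K z) =
            TensorProduct.rid k N (K.subtype.rTensor k z) := by
          intro z
          induction z with
          | zero => simp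
          | add x y hx hy => simp only [map_add, hx, hy]
          | tmul a c => simp
        rw [h1, ← lTensor_rTensor, hcoK, P.counit]
        rfl
      coact_aut := by
        intro n
        apply inj
        rw [hcoK]
        have h1 : ∀ z : K ⊗[k] H, K.subtype.rTensor H (TensorProduct.map
            (P.aut.ofSubmodules K K haut').toLinearMap D.α.toLinearMap z) =
            TensorProduct.map P.aut.toLinearMap D.α.toLinearMap (K.subtype.rTensor H z) := by
          intro z
          induction z with
          | zero => simp
          | add x y hx hy => simp only [map_add, hx, hy]
          | tmul a c => simp
        rw [h1, hcoK, ← P.coact_aut]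
        rfl
      compat := by
        intro n a
        apply inj
        rw [hcoK, hactK, P.compat, ← hcoK]
        generalize co n = u
        generalize D.ρ a = v
        induction u with
        | zero => simp
        | add x y hx hy => simp only [map_add, LinearMap.add_apply, hx, hy]
        | tmul x y =>
          induction v with
          | zero => simp
          | add x y hx hy => simp only [map_add, hx, hy]
          | tmul b g => simp [hactK] }
  exact ⟨R, hactK, hcoK⟩

/-- Functoriality of the induced module. -/
def BMod.fmap (T : BMod D M) (T' : BMod D N) (f : M →ₗ[k] N) (hf : T.IsHom T' f) :
    T.X →ₗ[k] T'.X :=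
  T.lift (LinearMap.mk₂ k (fun m a => T'.i (f m) a)
      (by intros; simp [BMod.i_add]) (by intros; simp [BMod.i_smul])
      (by intros; simp) (by intros; simp))
    (by
      intro m a b hb
      simp only [LinearMap.mk₂_apply]
      rw [hf.1 _ _ hb, T'.i_bal _ hb])

theorem BMod.fmap_i (T : BMod D M) (T' : BMod D N) (f : M →ₗ[k] N) (hf : T.IsHom T' f) (m : M)
    (a : A) : T.fmap T' f hf (T.i m a) = T'.i (f m) a := by
  simp [BMod.fmap, BMod.lift_i]

theorem BMod.fmap_η (T : BMod D M) (T' : BMod D N) (f : M →ₗ[k] N) (hf : T.IsHom T' f) (m : M) :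
    T.fmap T' f hf (T.η m) = T'.η (f m) := T.fmap_i T' f hf m _

theorem BMod.fmap_mkQ (T : BMod D M) (T' : BMod D N) (f : M →ₗ[k] N) (hf : T.IsHom T' f)
    (x : M ⊗[k] A) : T.fmap T' f hf ((D.rel T.act).mkQ x) = (D.rel T'.act).mkQ (f.rTensor A x) := by
  induction x with
  | zero => simp
  | add x y hx hy => simp only [map_add, hx, hy]
  | tmul m a => exact T.fmap_i T' f hf m a

/-- Cokernels of module maps. -/
theorem BMod.exists_coker (T : BMod D M) (T' : BMod D N) (f : M →ₗ[k] N) (hf : T.IsHom T' f) :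
    ∃ C : BMod D (N ⧸ LinearMap.range f), T'.IsHom C (LinearMap.range f).mkQ := by
  obtain ⟨p, hp, hp'⟩ := D.exists_proj
  set R := LinearMap.range f with hR
  have h1 : ∀ a, R ≤ R.comap (T'.act.flip (p a)) := by
    rintro a _ ⟨m, rfl⟩
    exact ⟨T.act m (p a), hf.1 _ _ (hp a)⟩
  have h2 : R.map (T'.aut : N →ₗ[k] N) = R := by
    ext n
    constructor
    · rintro ⟨_, ⟨m, rfl⟩, rfl⟩
      exact ⟨T.aut m, hf.2 m⟩
    · rintro ⟨m, rfl⟩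
      refine ⟨f (T.aut.symm m), ⟨_, rfl⟩, ?_⟩
      change T'.aut (f _) = _
      rw [← hf.2]; simp
  let actC : (N ⧸ R) →ₗ[k] A →ₗ[k] (N ⧸ R) :=
    LinearMap.flip
      { toFun := fun a => R.mapQ R (T'.act.flip (p a)) (h1 a)
        map_add' := by intros; ext; simp
        map_smul' := by intros; ext; simp }
  have hactC : ∀ n a, actC (R.mkQ n) a = R.mkQ (T'.act n (p a)) := fun n a => rfl
  have hautC : ∀ n, Submodule.Quotient.equiv R R T'.aut h2 (R.mkQ n) = R.mkQ (T'.aut n) :=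
    fun n => rfl
  let C : BMod D (N ⧸ R) :=
    { act := actC
      aut := Submodule.Quotient.equiv R R T'.aut h2
      act_act := by
        intro n a ha b hb
        obtain ⟨n, rfl⟩ := R.mkQ_surjective n
        have := T'.act_act n a ha b hb
        rw [hactC, hactC, hactC, hp' a ha, hp' b hb, hp' _ (D.mul_B ha hb), this]
      act_one := by
        intro n
        obtain ⟨n, rfl⟩ := R.mkQ_surjective n
        rw [hactC, hp' _ D.one_B, T'.act_one]
      aut_act := by
        intro n a ha
        obtain ⟨n, rfl⟩ := R.mkQ_surjective n
        rw [hactC, hautC, hautC, hactC, hp' _ ha, hp' _ (D.β_B ha), T'.aut_act _ _ ha] }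
  refine ⟨C, ?_, ?_⟩
  · intro m b hb
    change _ = actC _ _
    rw [hactC, hp' b hb]
  · intro m
    rfl

theorem FF_of_unit_counit
    (hU : ∀ (M : Type) [AddCommGroup M] [Module k M] (T : BMod D M), T.UnitBij)
    (hC : ∀ (N : Type) [AddCommGroup N] [Module k N] (P : HMod D N), ∃ Nc : Submodule k N,
      (∀ n, n ∈ Nc ↔ P.coact n = n ⊗ₜ D.oH) ∧ P.CounitBij Nc) : D.FF := by
  intro M₁ M₂ M₃ _ _ _ _ _ _ T₁ T₂ T₃ f g hf hg
  rw [range_eq_ker_of]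
  constructor
  · intro hex x
    constructor
    · intro hx
      let G := T₂.fmap T₃ g hg
      obtain ⟨R, hR, hR'⟩ := T₂.F.exists_ker T₃.F G
        (by
          intro n a
          induction n using T₂.X_ind with
          | hz => simp
          | ha x y hx hy => simp only [map_add, LinearMap.add_apply, hx, hy]
          | hi m c => simp [BMod.F_act, G, BMod.fmap_i])
        (by
          intro n
          induction n using T₂.X_ind with
          | hz => simp
          | ha x y hx hy => simp only [map_add, hx, hy]
          | hi m c =>
            change G (T₂.autX _) = T₃.autX _
            simp [G, BMod.fmap_i, hg.2])
        (by
          intro n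
          induction n using T₂.X_ind with
          | hz => simp
          | ha x y hx hy => simp only [map_add, hx, hy]
          | hi m c =>
            rw [BMod.F_coact, BMod.F_coact, BMod.coactX_i, BMod.fmap_i, BMod.coactX_i,
              rTensor_rTensor]
            have : G ∘ₗ T₂.i m = T₃.i (g m) := by
              ext c
              exact T₂.fmap_i T₃ g hg m c
            rw [this])
      obtain ⟨Nc, hN, hs, -⟩ := hC _ R
      have hall : ∀ z : Nc ⊗[k] A, ∃ y, ((R.counitMap Nc z : LinearMap.ker G) : T₂.X) =
          (D.rel T₂.act).mkQ (f.rTensor A y) := by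
        intro z
        induction z with
        | zero => exact ⟨0, by simp⟩
        | add x y hx hy =>
          obtain ⟨u, hu⟩ := hx
          obtain ⟨v, hv⟩ := hy
          exact ⟨u + v, by simp only [map_add, Submodule.coe_add, hu, hv]⟩
        | tmul n a =>
          have h1 := (hN n).1 n.2
          have h2 := hR' n
          rw [h1, LinearMap.rTensor_tmul] at h2
          obtain ⟨m, hm⟩ := (hU _ T₂).2 _ h2.symm
          have h3 : G (T₂.η m) = 0 := by
            rw [hm]; exact (n : LinearMap.ker G).2
          rw [BMod.fmap_η] at h3
          obtain ⟨m', rfl⟩ := (hex m).1 ((hU _ T₃).1 _ h3)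
          refine ⟨m' ⊗ₜ a, ?_⟩
          have hm : T₂.η (f m') = ((n : LinearMap.ker G) : T₂.X) := hm
          rw [HMod.counitMap_tmul, hR, ← hm, LinearMap.rTensor_tmul, BMod.η_apply, BMod.F_act,
            BMod.actX_i, D.oA_mul]
          rfl
      have hxk : (D.rel T₂.act).mkQ x ∈ LinearMap.ker G := by
        rw [LinearMap.mem_ker, BMod.fmap_mkQ]
        exact (Submodule.Quotient.mk_eq_zero _).2 hx
      obtain ⟨z, hz⟩ := hs ⟨_, hxk⟩
      obtain ⟨y, hy⟩ := hall z
      rw [hz] at hy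
      refine ⟨y, (Submodule.Quotient.mk_eq_zero _).1 ?_⟩
      have hy : (D.rel T₂.act).mkQ x = (D.rel T₂.act).mkQ (f.rTensor A y) := hy
      change (D.rel T₂.act).mkQ (x - f.rTensor A y) = 0
      rw [map_sub, hy, sub_self]
    · rintro ⟨y, hy⟩
      have h1 := D.rel_map _ _ g hg.1 hy
      rw [map_sub, rTensor_rTensor] at h1
      have : g ∘ₗ f = 0 := by
        ext m
        exact (hex _).2 ⟨m, rfl⟩
      rw [this, LinearMap.rTensor_zero, LinearMap.zero_apply] at h1
      exact (sub_zero (g.rTensor A x)) ▸ h1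
  · intro hex m
    constructor
    · intro hm
      obtain ⟨C, hπ⟩ := T₁.exists_coker T₂ f hf
      obtain ⟨y, hy⟩ := (hex (m ⊗ₜ D.oA)).1 (by rw [LinearMap.rTensor_tmul, hm]; simp)
      have h1 := D.rel_map _ _ _ hπ.1 hy
      rw [map_sub, rTensor_rTensor] at h1
      have : (LinearMap.range f).mkQ ∘ₗ f = 0 := by
        ext m
        simp
      rw [this, LinearMap.rTensor_zero, LinearMap.zero_apply, sub_zero,
        LinearMap.rTensor_tmul] at h1
      have h2 := (hU _ C).1 _ ((Submodule.Quotient.mk_eq_zero _).2 h1)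
      obtain ⟨y, hy⟩ := (Submodule.Quotient.mk_eq_zero _).1 h2
      exact ⟨y, hy.symm⟩
    · rintro ⟨y, rfl⟩
      have h1 := (hex (f y ⊗ₜ D.oA)).2 ⟨y ⊗ₜ D.oA, by simp⟩
      rw [LinearMap.rTensor_tmul] at h1
      exact (hU _ T₃).1 _ ((Submodule.Quotient.mk_eq_zero _).2 h1)

end HomDT
end


noncomputable section
namespace HomDT

section gen
variable {k : Type} [Field k] {H N : Type} [AddCommGroup H] [Module k H]
    [AddCommGroup N] [Module k N]

theorem map_inj (ν : N ≃ₗ[k] N) (α : H ≃ₗ[k] H) :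
    Function.Injective (TensorProduct.map ν.toLinearMap α.toLinearMap) :=
  (TensorProduct.congr ν α).injective

theorem coassoc_iff (comul : H →ₗ[k] H ⊗[k] H) (α : H ≃ₗ[k] H) (ν : N ≃ₗ[k] N)
    (coact : N →ₗ[k] N ⊗[k] H)
    (hα : comul ∘ₗ α.toLinearMap = (TensorProduct.map α.toLinearMap α.toLinearMap) ∘ₗ comul)
    (hν : coact ∘ₗ ν.toLinearMap = (TensorProduct.map ν.toLinearMap α.toLinearMap) ∘ₗ coact) :
    ((TensorProduct.map ν.symm.toLinearMap comul) ∘ₗ coact =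
      (TensorProduct.assoc k N H H).toLinearMap ∘ₗ
        (TensorProduct.map coact α.symm.toLinearMap) ∘ₗ coact) ↔
    ∀ n, TensorProduct.assoc k N H H
        ((TensorProduct.map ν.toLinearMap α.toLinearMap ∘ₗ coact).rTensor H
          (TensorProduct.map ν.toLinearMap α.toLinearMap (coact n))) =
      (TensorProduct.map α.toLinearMap α.toLinearMap ∘ₗ comul).lTensor N
        (TensorProduct.map ν.toLinearMap α.toLinearMap (coact n)) := by
  let E : N ⊗[k] (H ⊗[k] H) ≃ₗ[k] N ⊗[k] (H ⊗[k] H) :=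
    TensorProduct.congr (ν.trans ν) (TensorProduct.congr (α.trans α) (α.trans α))
  have hα' : ∀ h, comul (α h) = TensorProduct.map α.toLinearMap α.toLinearMap (comul h) :=
    fun h => LinearMap.congr_fun hα h
  have hν' : ∀ h, coact (ν h) = TensorProduct.map ν.toLinearMap α.toLinearMap (coact h) :=
    fun h => LinearMap.congr_fun hν h
  have h1 : ∀ z, E (TensorProduct.map ν.symm.toLinearMap comul z) =
      (TensorProduct.map α.toLinearMap α.toLinearMap ∘ₗ comul).lTensor N
        (TensorProduct.map ν.toLinearMap α.toLinearMap z) := by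
    intro z
    induction z with
    | zero => simp
    | add x y hx hy => simp only [map_add, hx, hy]
    | tmul n h =>
      simp only [TensorProduct.map_tmul, LinearMap.lTensor_tmul, LinearMap.comp_apply,
        LinearEquiv.coe_coe, hα', E, TensorProduct.congr_tmul, LinearEquiv.trans_apply,
        LinearEquiv.apply_symm_apply]
      congr 1
      generalize comul h = u
      induction u with
      | zero => simp
      | add x y hx hy => simp only [map_add, hx, hy]
      | tmul x y => simp
  have h2 : ∀ z, E (TensorProduct.assoc k N H H
      (TensorProduct.map coact α.symm.toLinearMap z)) =
      TensorProduct.assoc k N H H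
        ((TensorProduct.map ν.toLinearMap α.toLinearMap ∘ₗ coact).rTensor H
          (TensorProduct.map ν.toLinearMap α.toLinearMap z)) := by
    intro z
    induction z with
    | zero => simp
    | add x y hx hy => simp only [map_add, hx, hy]
    | tmul n h =>
      simp only [TensorProduct.map_tmul, LinearMap.rTensor_tmul, LinearMap.comp_apply,
        LinearEquiv.coe_coe, hν']
      generalize coact n = u
      induction u with
      | zero => simp
      | add x y hx hy => simp only [map_add, hx, hy, TensorProduct.add_tmul]
      | tmul x y => simp [E]
  constructor
  · intro h n
    rw [← h1, ← h2]
    exact congrArg E (LinearMap.congr_fun h n).symm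
  · intro h
    refine LinearMap.ext fun n => E.injective ?_
    exact (h1 _).trans ((h n).symm.trans (h2 _).symm)

theorem counit_iff (ε : H →ₗ[k] k) (α : H ≃ₗ[k] H) (ν : N ≃ₗ[k] N)
    (coact : N →ₗ[k] N ⊗[k] H) (hε : ε ∘ₗ α.toLinearMap = ε) :
    ((TensorProduct.rid k N).toLinearMap ∘ₗ (TensorProduct.map LinearMap.id ε) ∘ₗ coact =
      ν.symm.toLinearMap) ↔
    ∀ n, TensorProduct.rid k N (ε.lTensor N
      (TensorProduct.map ν.toLinearMap α.toLinearMap (coact n))) = n := by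
  have hε' : ∀ h, ε (α h) = ε h := fun h => LinearMap.congr_fun hε h
  have h1 : ∀ z, TensorProduct.rid k N (ε.lTensor N
      (TensorProduct.map ν.toLinearMap α.toLinearMap z)) =
      ν (TensorProduct.rid k N (TensorProduct.map LinearMap.id ε z)) := by
    intro z
    induction z with
    | zero => simp
    | add x y hx hy => simp only [map_add, hx, hy]
    | tmul n h => simp [hε']
  simp only [h1]
  constructor
  · intro h n
    have := LinearMap.congr_fun h n
    simp only [LinearMap.comp_apply, LinearEquiv.coe_coe] at this
    rw [this]; simp
  · intro h
    refine LinearMap.ext fun n => ν.injective ?_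
    refine (h n).trans ?_
    simp

theorem coact_aut_iff (α : H ≃ₗ[k] H) (ν : N ≃ₗ[k] N) (coact : N →ₗ[k] N ⊗[k] H) :
    (coact ∘ₗ ν.toLinearMap = (TensorProduct.map ν.toLinearMap α.toLinearMap) ∘ₗ coact) ↔
    ∀ n, TensorProduct.map ν.toLinearMap α.toLinearMap (coact (ν n)) =
      TensorProduct.map ν.toLinearMap α.toLinearMap
        (TensorProduct.map ν.toLinearMap α.toLinearMap (coact n)) := by
  constructor
  · intro h n
    exact congrArg _ (LinearMap.congr_fun h n)
  · intro h
    exact LinearMap.ext fun n => map_inj ν α (h n)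

theorem ttt_map₂ {P Q S T : Type} [AddCommGroup P] [Module k P] [AddCommGroup Q] [Module k Q]
    [AddCommGroup S] [Module k S] [AddCommGroup T] [Module k T]
    (f : N →ₗ[k] P →ₗ[k] Q) (g : H →ₗ[k] S →ₗ[k] T) (u : N ⊗[k] H) (v : P ⊗[k] S) :
    TensorProduct.map (TensorProduct.lift f) (TensorProduct.lift g)
      (TensorProduct.tensorTensorTensorComm k N H P S (u ⊗ₜ v)) =
      TensorProduct.map₂ f g u v := by
  induction u with
  | zero => simp
  | add x y hx hy => simp only [map_add, LinearMap.add_apply, TensorProduct.add_tmul, hx, hy]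
  | tmul a b =>
    induction v with
    | zero => simp
    | add x y hx hy => simp only [map_add, TensorProduct.tmul_add, hx, hy]
    | tmul c d => simp

/-- The twisted and untwisted compatibilities of an action with a coaction. -/
theorem compat_iff {A : Type} [AddCommGroup A] [Module k A]
    (mul mul' : H →ₗ[k] H →ₗ[k] H) (α : H ≃ₗ[k] H) (ν : N ≃ₗ[k] N) (β : A ≃ₗ[k] A)
    (act act' : N →ₗ[k] A →ₗ[k] N) (coact : N →ₗ[k] N ⊗[k] H) (ρ : A →ₗ[k] A ⊗[k] H)
    (hmul : ∀ x y, mul x y = mul' (α x) (α y)) (hact : ∀ x y, act x y = act' (ν x) (β y))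
    (hact' : ∀ x y, act x y = ν (act' x y))
    (hν : coact ∘ₗ ν.toLinearMap = (TensorProduct.map ν.toLinearMap α.toLinearMap) ∘ₗ coact) :
    (coact ∘ₗ TensorProduct.lift act =
      (TensorProduct.map (TensorProduct.lift act) (TensorProduct.lift mul)) ∘ₗ
        (TensorProduct.tensorTensorTensorComm k N H A H).toLinearMap ∘ₗ
          (TensorProduct.map coact ρ)) ↔
    ∀ n a, TensorProduct.map ν.toLinearMap α.toLinearMap (coact (act' n a)) =
      TensorProduct.map₂ act' mul' (TensorProduct.map ν.toLinearMap α.toLinearMap (coact n))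
        (TensorProduct.map β.toLinearMap α.toLinearMap (ρ a)) := by
  have hν' : ∀ h, TensorProduct.map ν.toLinearMap α.toLinearMap (coact h) = coact (ν h) :=
    fun h => (LinearMap.congr_fun hν h).symm
  have h1 : ∀ n a, TensorProduct.map₂ act' mul'
        (TensorProduct.map ν.toLinearMap α.toLinearMap (coact n))
        (TensorProduct.map β.toLinearMap α.toLinearMap (ρ a)) =
      TensorProduct.map₂ act mul (coact n) (ρ a) := by
    intro n a
    have := map₂_map act mul act' mul' ν.toLinearMap β.toLinearMap LinearMap.id α.toLinearMap
      α.toLinearMap LinearMap.id hact hmul (coact n) (ρ a)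
    rw [← this]; simp
  simp only [h1]
  constructor
  · intro h n a
    have := LinearMap.congr_fun h (n ⊗ₜ a)
    rw [hν', ← hact']
    simp only [LinearMap.comp_apply, TensorProduct.lift.tmul, TensorProduct.map_tmul,
      LinearEquiv.coe_coe, ttt_map₂] at this
    exact this
  · intro h
    refine TensorProduct.ext' fun n a => ?_
    simp only [LinearMap.comp_apply, TensorProduct.lift.tmul, TensorProduct.map_tmul,
      LinearEquiv.coe_coe, ttt_map₂]
    rw [hact', ← hν', h]

end gen

variable {k : Type} [Field k] {H : Type} [AddCommGroup H] [Module k H]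
variable {A : Type} [AddCommGroup A] [Module k A]
variable {Hb : MonoidalHomBialgebra k H}

theorem Hb_aut_symm_mul (Hb : MonoidalHomBialgebra k H) (x y : H) :
    Hb.aut.symm (Hb.mul x y) = Hb.mul (Hb.aut.symm x) (Hb.aut.symm y) := by
  rw [LinearEquiv.symm_apply_eq, Hb.aut_mul]; simp

theorem Ac_aut_symm_mul (Ac : HomComoduleAlgebra Hb A) (x y : A) :
    Ac.aut.symm (Ac.mul x y) = Ac.mul (Ac.aut.symm x) (Ac.aut.symm y) := by
  rw [LinearEquiv.symm_apply_eq, Ac.aut_mul]; simp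

theorem Hb_assoc' (Hb : MonoidalHomBialgebra k H) (x y z : H) :
    Hb.mul (Hb.aut.symm (Hb.mul x y)) z = Hb.mul x (Hb.aut.symm (Hb.mul y z)) := by
  have := Hb.hom_assoc (Hb.aut.symm x) (Hb.aut.symm y) (Hb.aut.symm z)
  simp only [LinearEquiv.apply_symm_apply] at this
  rw [Hb_aut_symm_mul, Hb_aut_symm_mul, ← this]

theorem Ac_assoc' (Ac : HomComoduleAlgebra Hb A) (x y z : A) :
    Ac.mul (Ac.aut.symm (Ac.mul x y)) z = Ac.mul x (Ac.aut.symm (Ac.mul y z)) := by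
  have := Ac.hom_assoc (Ac.aut.symm x) (Ac.aut.symm y) (Ac.aut.symm z)
  simp only [LinearEquiv.apply_symm_apply] at this
  rw [Ac_aut_symm_mul, Ac_aut_symm_mul, ← this]

/-- The untwisted data. -/
def toUD (Ac : HomComoduleAlgebra Hb A) : UD k H A where
  mH := Hb.mul.compr₂ Hb.aut.symm.toLinearMap
  oH := Hb.one
  Δ := TensorProduct.map Hb.aut.toLinearMap Hb.aut.toLinearMap ∘ₗ Hb.comul
  ε := Hb.counit
  α := Hb.aut
  mA := Ac.mul.compr₂ Ac.aut.symm.toLinearMap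
  oA := Ac.one
  β := Ac.aut
  ρ := TensorProduct.map Ac.aut.toLinearMap Hb.aut.toLinearMap ∘ₗ Ac.coact
  mH_assoc := by
    intro x y z
    simp [Hb_assoc']
  oH_mul := by intro x; simp [Hb.oneMul]
  mul_oH := by intro x; simp [Hb.mulOne]
  coassocH := (coassoc_iff Hb.comul Hb.aut Hb.aut Hb.comul Hb.comul_aut Hb.comul_aut).1
    Hb.coassoc.symm
  counit_left := by
    have hε' : ∀ h, Hb.counit (Hb.aut h) = Hb.counit h :=
      fun h => LinearMap.congr_fun Hb.counit_aut h
    have h1 : ∀ z, TensorProduct.lid k H (Hb.counit.rTensor H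
        (TensorProduct.map Hb.aut.toLinearMap Hb.aut.toLinearMap z)) =
        Hb.aut (TensorProduct.lid k H (TensorProduct.map Hb.counit LinearMap.id z)) := by
      intro z
      induction z with
      | zero => simp
      | add x y hx hy => simp only [map_add, hx, hy]
      | tmul n h => simp [hε']
    intro x
    refine (h1 _).trans ?_
    have := LinearMap.congr_fun Hb.counit_left x
    simp only [LinearMap.comp_apply, LinearEquiv.coe_coe] at this
    rw [this]; simp
  counit_right := (counit_iff Hb.counit Hb.aut Hb.aut Hb.comul Hb.counit_aut).1 Hb.counit_right
  Δ_mul := (compat_iff Hb.mul (Hb.mul.compr₂ Hb.aut.symm.toLinearMap) Hb.aut Hb.aut Hb.aut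
    Hb.mul (Hb.mul.compr₂ Hb.aut.symm.toLinearMap) Hb.comul Hb.comul
    (by intros; simp [Hb_aut_symm_mul]) (by intros; simp [Hb_aut_symm_mul]) (by intros; simp)
    Hb.comul_aut).1 Hb.comul_mul
  Δ_one := by simp [Hb.comul_one, Hb.aut_one]
  ε_one := Hb.counit_one
  α_mul := by intro x y; simp [Hb_aut_symm_mul, Hb.aut_mul]
  α_one := Hb.aut_one
  Δ_α := (coact_aut_iff Hb.aut Hb.aut Hb.comul).1 Hb.comul_aut
  mA_assoc := by
    intro x y z
    simp [Ac_assoc']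
  oA_mul := by intro x; simp [Ac.oneMul]
  mul_oA := by intro x; simp [Ac.mulOne]
  β_mul := by intro x y; simp [Ac_aut_symm_mul, Ac.aut_mul]
  β_one := Ac.aut_one
  coassoc := (coassoc_iff Hb.comul Hb.aut Ac.aut Ac.coact Hb.comul_aut Ac.coact_aut).1 Ac.coassoc
  counit := (counit_iff Hb.counit Hb.aut Ac.aut Ac.coact Hb.counit_aut).1 Ac.counit
  ρ_β := (coact_aut_iff Hb.aut Ac.aut Ac.coact).1 Ac.coact_aut
  ρ_mul := (compat_iff Hb.mul (Hb.mul.compr₂ Hb.aut.symm.toLinearMap) Hb.aut Ac.aut Ac.aut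
    Ac.mul (Ac.mul.compr₂ Ac.aut.symm.toLinearMap) Ac.coact Ac.coact
    (by intros; simp [Hb_aut_symm_mul]) (by intros; simp [Ac_aut_symm_mul]) (by intros; simp)
    Ac.coact_aut).1 Ac.coact_mul
  ρ_one := by simp [Ac.coact_one, Hb.aut_one, Ac.aut_one]

variable (Ac : HomComoduleAlgebra Hb A)

theorem mH_apply (x y : H) : (toUD Ac).mH x y = Hb.aut.symm (Hb.mul x y) := rfl
theorem mA_apply (x y : A) : (toUD Ac).mA x y = Ac.aut.symm (Ac.mul x y) := rfl
theorem ρ_apply (x : A) : (toUD Ac).ρ x =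
  TensorProduct.map Ac.aut.toLinearMap Hb.aut.toLinearMap (Ac.coact x) := rfl
theorem β_eq : (toUD Ac).β = Ac.aut := rfl
theorem α_eq : (toUD Ac).α = Hb.aut := rfl
theorem oA_eq : (toUD Ac).oA = Ac.one := rfl
theorem oH_eq : (toUD Ac).oH = Hb.one := rfl
theorem ε_eq : (toUD Ac).ε = Hb.counit := rfl

theorem Ac_mul (x y : A) : Ac.mul x y = (toUD Ac).mA (Ac.aut x) (Ac.aut y) := by
  rw [mA_apply, Ac_aut_symm_mul]; simp

theorem Ac_mul' (x y : A) : Ac.mul x y = Ac.aut ((toUD Ac).mA x y) := by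
  rw [mA_apply]; simp

theorem Hb_mul (x y : H) : Hb.mul x y = (toUD Ac).mH (Hb.aut x) (Hb.aut y) := by
  rw [mH_apply, Hb_aut_symm_mul]; simp

theorem coinv_iff {N : Type} [AddCommGroup N] [Module k N] (ν : N ≃ₗ[k] N)
    (coact : N →ₗ[k] N ⊗[k] H) (n : N) : coact n = ν.symm n ⊗ₜ Hb.one ↔
    TensorProduct.map ν.toLinearMap Hb.aut.toLinearMap (coact n) = n ⊗ₜ Hb.one := by
  rw [← (map_inj ν Hb.aut).eq_iff]
  simp [Hb.aut_one]

theorem mem_B_iff (a : A) : a ∈ (toUD Ac).B ↔ a ∈ coinvA Ac :=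
  (coinv_iff Ac.aut Ac.coact a).symm

theorem rel_eq {M : Type} [AddCommGroup M] [Module k M] (μ : M ≃ₗ[k] M)
    (act act' : M →ₗ[k] A →ₗ[k] M)
    (h : ∀ m, ∀ b ∈ (toUD Ac).B, act m b = act' (μ m) (Ac.aut b)) :
    relSubR Ac.mul Ac.aut (coinvA Ac) act μ = (toUD Ac).rel act' := by
  unfold relSubR UD.rel
  congr 1
  ext x
  constructor
  · rintro ⟨m, a, b, hb, rfl⟩
    rw [← mem_B_iff] at hb
    refine ⟨μ m, Ac.aut a, Ac.aut b, (toUD Ac).β_B hb, ?_⟩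
    rw [h _ _ hb, Ac_mul]
  · rintro ⟨m, a, b, hb, rfl⟩
    have hb' : Ac.aut.symm b ∈ (toUD Ac).B := (toUD Ac).β_symm_B hb
    refine ⟨μ.symm m, Ac.aut.symm a, Ac.aut.symm b, (mem_B_iff Ac _).1 hb', ?_⟩
    rw [h _ _ hb', Ac_mul]
    simp

/-- `T` is the untwisted version of `S`. -/
def Link {M : Type} [AddCommGroup M] [Module k M] (S : HomModuleOn Ac (coinvA Ac) M)
    (T : BMod (toUD Ac) M) : Prop :=
  S.aut = T.aut ∧ ∀ m a, S.act m a = T.aut (T.act m a)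

theorem exists_T {M : Type} [AddCommGroup M] [Module k M] (S : HomModuleOn Ac (coinvA Ac) M) :
    ∃ T, Link Ac S T := by
  have hs : ∀ m, ∀ b ∈ (toUD Ac).B, S.aut.symm (S.act m b) =
      S.act (S.aut.symm m) (Ac.aut.symm b) := by
    intro m b hb
    have hb' : Ac.aut.symm b ∈ (toUD Ac).B := (toUD Ac).β_symm_B hb
    rw [LinearEquiv.symm_apply_eq, S.aut_act _ _ ((mem_B_iff Ac _).1 hb')]
    simp
  let T : BMod (toUD Ac) M :=
    { act := S.act.compr₂ S.aut.symm.toLinearMap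
      aut := S.aut
      act_act := by
        intro m a ha b hb
        have ha' : Ac.aut.symm a ∈ (toUD Ac).B := (toUD Ac).β_symm_B ha
        have hb' : Ac.aut.symm b ∈ (toUD Ac).B := (toUD Ac).β_symm_B hb
        have := S.act_act (S.aut.symm m) _ ((mem_B_iff Ac _).1 ha') _ ((mem_B_iff Ac _).1 hb')
        simp only [LinearEquiv.apply_symm_apply] at this
        simp only [LinearMap.compr₂_apply, LinearEquiv.coe_coe]
        rw [hs _ _ ha, this, mA_apply, Ac_aut_symm_mul]
      act_one := by
        intro m
        simp [oA_eq, S.act_one]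
      aut_act := by
        intro m a ha
        simp only [LinearMap.compr₂_apply, LinearEquiv.coe_coe, LinearEquiv.apply_symm_apply]
        rw [hs _ _ ((toUD Ac).β_B ha)]
        simp [β_eq] }
  exact ⟨T, rfl, fun m a => by simp [T]⟩

theorem exists_S {M : Type} [AddCommGroup M] [Module k M] (T : BMod (toUD Ac) M) :
    ∃ S, Link Ac S T := by
  let S : HomModuleOn Ac (coinvA Ac) M :=
    { act := T.act.compr₂ T.aut.toLinearMap
      aut := T.aut
      act_act := by
        intro m a ha b hb
        rw [← mem_B_iff] at ha hb
        simp only [LinearMap.compr₂_apply, LinearEquiv.coe_coe]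
        rw [T.aut_act _ _ ha, Ac_mul]
        exact congrArg _ (T.act_act _ _ ((toUD Ac).β_B ha) _ ((toUD Ac).β_B hb))
      act_one := by
        intro m
        simp only [LinearMap.compr₂_apply, LinearEquiv.coe_coe]
        exact congrArg _ (T.act_one m)
      aut_act := by
        intro m a ha
        rw [← mem_B_iff] at ha
        simp only [LinearMap.compr₂_apply, LinearEquiv.coe_coe]
        rw [T.aut_act _ _ ha]
        rfl }
  exact ⟨S, rfl, fun m a => rfl⟩

variable {Ac}

theorem Link.rel {M : Type} [AddCommGroup M] [Module k M] {S : HomModuleOn Ac (coinvA Ac) M}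
    {T : BMod (toUD Ac) M} (h : Link Ac S T) :
    relSubR Ac.mul Ac.aut (coinvA Ac) S.act S.aut = (toUD Ac).rel T.act := by
  apply rel_eq
  intro m b hb
  rw [h.2, T.aut_act _ _ hb, h.1]
  rfl

theorem Link.hom {M M' : Type} [AddCommGroup M] [Module k M] [AddCommGroup M'] [Module k M']
    {S : HomModuleOn Ac (coinvA Ac) M} {T : BMod (toUD Ac) M} (h : Link Ac S T)
    {S' : HomModuleOn Ac (coinvA Ac) M'} {T' : BMod (toUD Ac) M'} (h' : Link Ac S' T')
    (f : M →ₗ[k] M') : IsHomModuleOnHomR Ac (coinvA Ac) S S' f ↔ T.IsHom T' f := by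
  unfold IsHomModuleOnHomR BMod.IsHom
  rw [h.1, h'.1]
  refine and_congr_left fun hf => ?_
  refine forall_congr' fun m => forall_congr' fun b => ?_
  rw [← mem_B_iff]
  refine imp_congr_right fun hb => ?_
  rw [h.2, h'.2, hf, T'.aut.injective.eq_iff]

/-- Exactness of induced maps on quotients, without the quotients. -/
theorem exact_quot {X Y Z : Type} [AddCommGroup X] [Module k X] [AddCommGroup Y] [Module k Y]
    [AddCommGroup Z] [Module k Z] (P : Submodule k X) (Q : Submodule k Y) (R : Submodule k Z)
    (f : X →ₗ[k] Y) (g : Y →ₗ[k] Z) (F : (X ⧸ P) →ₗ[k] (Y ⧸ Q)) (G : (Y ⧸ Q) →ₗ[k] (Z ⧸ R))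
    (hF : F ∘ₗ P.mkQ = Q.mkQ ∘ₗ f) (hG : G ∘ₗ Q.mkQ = R.mkQ ∘ₗ g) :
    LinearMap.range F = LinearMap.ker G ↔ ∀ x, g x ∈ R ↔ ∃ y, x - f y ∈ Q := by
  have hF' : ∀ x, F (P.mkQ x) = Q.mkQ (f x) := fun x => LinearMap.congr_fun hF x
  have hG' : ∀ x, G (Q.mkQ x) = R.mkQ (g x) := fun x => LinearMap.congr_fun hG x
  have e : ∀ (x : Y) y, x - f y ∈ Q ↔ Q.mkQ x = F (P.mkQ y) := by
    intro x y
    rw [hF', ← sub_eq_zero, ← map_sub]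
    exact (Submodule.Quotient.mk_eq_zero _).symm
  have e' : ∀ x, g x ∈ R ↔ G (Q.mkQ x) = 0 := by
    intro x
    rw [hG']
    exact (Submodule.Quotient.mk_eq_zero _).symm
  rw [range_eq_ker_of]
  simp only [e, e']
  constructor
  · intro h x
    rw [h]
    constructor
    · rintro ⟨y, hy⟩
      obtain ⟨y, rfl⟩ := P.mkQ_surjective y
      exact ⟨y, hy⟩
    · rintro ⟨y, hy⟩
      exact ⟨_, hy⟩
  · intro h x
    obtain ⟨x, rfl⟩ := Q.mkQ_surjective x
    rw [h]
    constructor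
    · rintro ⟨y, hy⟩
      exact ⟨_, hy⟩
    · rintro ⟨y, hy⟩
      obtain ⟨y, rfl⟩ := P.mkQ_surjective y
      exact ⟨y, hy⟩

theorem FF_of_frozen (hF : FaithfullyFlatLeftOf Ac (coinvA Ac)) : (toUD Ac).FF := by
  intro M₁ M₂ M₃ _ _ _ _ _ _ T₁ T₂ T₃ f g hf hg
  obtain ⟨S₁, L₁⟩ := exists_S Ac T₁
  obtain ⟨S₂, L₂⟩ := exists_S Ac T₂
  obtain ⟨S₃, L₃⟩ := exists_S Ac T₃
  have := hF M₁ M₂ M₃ S₁ S₂ S₃ f g ((L₁.hom L₂ f).2 hf) ((L₂.hom L₃ g).2 hg)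
  rw [L₁.rel, L₂.rel, L₃.rel] at this
  have h1 : (toUD Ac).rel T₁.act ≤ ((toUD Ac).rel T₂.act).comap (TensorProduct.map f LinearMap.id) :=
    fun x hx => (toUD Ac).rel_map _ _ f hf.1 hx
  have h2 : (toUD Ac).rel T₂.act ≤ ((toUD Ac).rel T₃.act).comap (TensorProduct.map g LinearMap.id) :=
    fun x hx => (toUD Ac).rel_map _ _ g hg.1 hx
  rw [this (Submodule.mapQ _ _ _ h1) (Submodule.mapQ _ _ _ h2) (Submodule.mapQ_mkQ ..)
    (Submodule.mapQ_mkQ ..)]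
  exact exact_quot _ _ _ _ _ _ _ (Submodule.mapQ_mkQ ..) (Submodule.mapQ_mkQ ..)

theorem frozen_of_FF (hF : (toUD Ac).FF) : FaithfullyFlatLeftOf Ac (coinvA Ac) := by
  intro M₁ M₂ M₃ _ _ _ _ _ _ S₁ S₂ S₃ f g hf hg
  obtain ⟨T₁, L₁⟩ := exists_T Ac S₁
  obtain ⟨T₂, L₂⟩ := exists_T Ac S₂
  obtain ⟨T₃, L₃⟩ := exists_T Ac S₃
  rw [L₁.rel, L₂.rel, L₃.rel]
  intro F G hF' hG'
  rw [hF M₁ M₂ M₃ T₁ T₂ T₃ f g ((L₁.hom L₂ f).1 hf) ((L₂.hom L₃ g).1 hg)]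
  exact (exact_quot _ _ _ _ _ _ _ hF' hG').symm

theorem can_eq : canPreLin Ac = (toUD Ac).can (toUD Ac).mA := by
  refine TensorProduct.ext' fun a b => ?_
  rw [UD.can_tmul, ρ_apply]
  simp only [canPreLin, LinearMap.comp_apply, TensorProduct.map_tmul, LinearEquiv.coe_coe]
  generalize Ac.coact b = u
  induction u with
  | zero => simp
  | add x y hx hy => simp only [map_add, TensorProduct.tmul_add, hx, hy]
  | tmul x y => simp [mA_apply, Ac_aut_symm_mul]

theorem relA : relSubR Ac.mul Ac.aut (coinvA Ac) Ac.mul Ac.aut = (toUD Ac).rel (toUD Ac).mA :=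
  rel_eq Ac _ _ _ fun m b _ => Ac_mul Ac m b

theorem galois_iff : (∀ canMap :
      ((A ⊗[k] A) ⧸ relSubR Ac.mul Ac.aut (coinvA Ac) Ac.mul Ac.aut) →ₗ[k] A ⊗[k] H,
        canMap ∘ₗ (relSubR Ac.mul Ac.aut (coinvA Ac) Ac.mul Ac.aut).mkQ = canPreLin Ac →
        Function.Bijective canMap) ↔ (toUD Ac).Galois := by
  rw [relA, can_eq]
  constructor
  · intro h
    have h1 : (toUD Ac).rel (toUD Ac).mA ≤ LinearMap.ker ((toUD Ac).can (toUD Ac).mA) :=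
      fun x hx => (toUD Ac).reg.can_rel hx
    obtain ⟨hi, hs⟩ := h (Submodule.liftQ _ _ h1) (Submodule.liftQ_mkQ ..)
    constructor
    · intro w
      obtain ⟨z, hz⟩ := hs w
      obtain ⟨z, rfl⟩ := Submodule.mkQ_surjective _ z
      exact ⟨z, hz⟩
    · intro z hz
      rw [← Submodule.Quotient.mk_eq_zero]
      apply hi
      rw [map_zero]
      exact hz
  · rintro ⟨hs, hi⟩ c hc
    have hc' : ∀ z, c (((toUD Ac).rel (toUD Ac).mA).mkQ z) = (toUD Ac).can (toUD Ac).mA z :=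
      fun z => LinearMap.congr_fun hc z
    constructor
    · rw [injective_iff_map_eq_zero]
      intro z hz
      obtain ⟨z, rfl⟩ := Submodule.mkQ_surjective _ z
      rw [hc'] at hz
      exact (Submodule.Quotient.mk_eq_zero _).2 (hi z hz)
    · intro w
      obtain ⟨z, hz⟩ := hs w
      exact ⟨_, (hc' z).trans hz⟩

theorem autX₁_inj {M : Type} [AddCommGroup M] [Module k M] (T : BMod (toUD Ac) M) :
    Function.Injective (T.autX₁.rTensor H) := by
  have h : T.autX.toLinearMap ∘ₗ T.autX₁ = LinearMap.id := by
    refine LinearMap.ext fun x => ?_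
    exact T.autX.apply_symm_apply x
  intro x y hxy
  have := congrArg (T.autX.toLinearMap.rTensor H) hxy
  simpa only [rTensor_rTensor, h, LinearMap.rTensor_id, LinearMap.id_apply] using this

theorem Link.unit {M : Type} [AddCommGroup M] [Module k M] {S : HomModuleOn Ac (coinvA Ac) M}
    {T : BMod (toUD Ac) M} (h : Link Ac S T) :
    UnitBijectiveR Ac (coinvA Ac) S ↔ T.UnitBij := by
  unfold UnitBijectiveR
  rw [h.rel, h.1]
  have h1 : (T.autX₁.rTensor H ∘ₗ T.coactX) ∘ₗ ((toUD Ac).rel T.act).mkQ =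
      (TensorProduct.map ((toUD Ac).rel T.act).mkQ LinearMap.id) ∘ₗ quotCoactPreR Ac T.aut := by
    refine TensorProduct.ext' fun m a => ?_
    change T.autX₁.rTensor H (T.coactX (T.i m a)) = _
    rw [T.coactX_i, rTensor_rTensor, ρ_apply]
    simp only [quotCoactPreR, LinearMap.comp_apply, TensorProduct.map_tmul, LinearEquiv.coe_coe]
    generalize Ac.coact a = u
    induction u with
    | zero => simp
    | add x y hx hy => simp only [map_add, TensorProduct.tmul_add, hx, hy]
    | tmul x y =>
      simp only [TensorProduct.map_tmul, LinearMap.rTensor_tmul, LinearMap.comp_apply,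
        LinearEquiv.coe_coe, TensorProduct.assoc_symm_tmul, BMod.autX₁_i, β_eq,
        LinearEquiv.symm_apply_apply, LinearMap.id_apply]
      rfl
  have h2 : T.autX₁ ∘ₗ ((toUD Ac).rel T.act).mkQ = ((toUD Ac).rel T.act).mkQ ∘ₗ
        TensorProduct.map T.aut.symm.toLinearMap Ac.aut.symm.toLinearMap := by
    refine TensorProduct.ext' fun m a => ?_
    exact T.autX₁_i m a
  have h3 : ∀ x, (T.autX₁.rTensor H ∘ₗ T.coactX) x = T.autX₁ x ⊗ₜ Hb.one ↔
      T.coactX x = x ⊗ₜ Hb.one := by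
    intro x
    rw [← (autX₁_inj T).eq_iff (a := T.coactX x)]
    simp
  have h4 : ((∀ m : M, (T.autX₁.rTensor H ∘ₗ T.coactX)
        (((toUD Ac).rel T.act).mkQ (T.aut.symm m ⊗ₜ[k] Ac.one)) =
        T.autX₁ (((toUD Ac).rel T.act).mkQ (T.aut.symm m ⊗ₜ[k] Ac.one)) ⊗ₜ[k] Hb.one) ∧
      Function.Injective
        (fun m : M => ((toUD Ac).rel T.act).mkQ (T.aut.symm m ⊗ₜ[k] Ac.one)) ∧
      ∀ x, (T.autX₁.rTensor H ∘ₗ T.coactX) x = T.autX₁ x ⊗ₜ[k] Hb.one →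
        ∃ m : M, ((toUD Ac).rel T.act).mkQ (T.aut.symm m ⊗ₜ[k] Ac.one) = x) ↔ T.UnitBij := by
    simp only [h3]
    change ((∀ m : M, T.coactX (T.η (T.aut.symm m)) = T.η (T.aut.symm m) ⊗ₜ (toUD Ac).oH) ∧
      Function.Injective (fun m : M => (T.η ∘ₗ T.aut.symm.toLinearMap) m) ∧
      ∀ x, T.coactX x = x ⊗ₜ[k] (toUD Ac).oH → ∃ m : M, T.η (T.aut.symm m) = x) ↔ _
    constructor
    · rintro ⟨-, hi, hs⟩
      refine ⟨fun m hm => ?_, fun x hx => ?_⟩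
      · have : T.aut m = 0 := hi (by simpa using hm)
        simpa using this
      · obtain ⟨m, hm⟩ := hs x hx
        exact ⟨_, hm⟩
    · rintro ⟨hi, hs⟩
      refine ⟨fun m => T.η_coinv _, ?_, fun x hx => ?_⟩
      · refine (injective_iff_map_eq_zero (T.η ∘ₗ T.aut.symm.toLinearMap)).2 fun m hm => ?_
        simpa using hi _ hm
      · obtain ⟨m, hm⟩ := hs x hx
        exact ⟨T.aut m, by simpa using hm⟩
  constructor
  · intro hu
    exact h4.1 (hu _ _ h1 h2)
  · intro hu ρbar θ hρ hθ
    have e1 : ρbar = T.autX₁.rTensor H ∘ₗ T.coactX :=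
      Submodule.linearMap_qext _ (hρ.trans h1.symm)
    have e2 : θ = T.autX₁ := Submodule.linearMap_qext _ (hθ.trans h2.symm)
    rw [e1, e2]
    exact h4.2 hu

variable (Ac) in
/-- `Q` is the untwisted version of `P`. -/
def LinkH {N : Type} [AddCommGroup N] [Module k N] (P : HomHopfModule Ac N)
    (Q : HMod (toUD Ac) N) : Prop :=
  P.aut = Q.aut ∧ (∀ m a, P.act m a = Q.aut (Q.act m a)) ∧
    ∀ n, Q.coact n = TensorProduct.map Q.aut.toLinearMap Hb.aut.toLinearMap (P.coact n)

theorem exists_Q {N : Type} [AddCommGroup N] [Module k N] (P : HomHopfModule Ac N) :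
    ∃ Q, LinkH Ac P Q := by
  have hs : ∀ m b, P.aut.symm (P.act m b) = P.act (P.aut.symm m) (Ac.aut.symm b) := by
    intro m b
    rw [LinearEquiv.symm_apply_eq, P.aut_act]
    simp
  let Q : HMod (toUD Ac) N :=
    { act := P.act.compr₂ P.aut.symm.toLinearMap
      aut := P.aut
      act_act := by
        intro m a b
        have := P.act_act (P.aut.symm m) (Ac.aut.symm a) (Ac.aut.symm b)
        simp only [LinearEquiv.apply_symm_apply] at this
        simp only [LinearMap.compr₂_apply, LinearEquiv.coe_coe]
        rw [hs _ a, this, mA_apply, Ac_aut_symm_mul]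
      act_one := by
        intro m
        simp [oA_eq, P.act_one]
      aut_act := by
        intro m a
        simp only [LinearMap.compr₂_apply, LinearEquiv.coe_coe, LinearEquiv.apply_symm_apply]
        rw [hs]
        simp [β_eq]
      coact := TensorProduct.map P.aut.toLinearMap Hb.aut.toLinearMap ∘ₗ P.coact
      coassoc := (coassoc_iff Hb.comul Hb.aut P.aut P.coact Hb.comul_aut P.coact_aut).1 P.coassoc
      counit := (counit_iff Hb.counit Hb.aut P.aut P.coact Hb.counit_aut).1 P.counit
      coact_aut := (coact_aut_iff Hb.aut P.aut P.coact).1 P.coact_aut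
      compat := (compat_iff Hb.mul (Hb.mul.compr₂ Hb.aut.symm.toLinearMap) Hb.aut P.aut Ac.aut
        P.act (P.act.compr₂ P.aut.symm.toLinearMap) P.coact Ac.coact
        (by intros; simp [Hb_aut_symm_mul]) (by intros; simp [hs]) (by intros; simp)
        P.coact_aut).1 P.compat }
  exact ⟨Q, rfl, fun m a => by simp [Q], fun n => rfl⟩

theorem exists_P {N : Type} [AddCommGroup N] [Module k N] (Q : HMod (toUD Ac) N) :
    ∃ P, LinkH Ac P Q := by
  let co : N →ₗ[k] N ⊗[k] H := (TensorProduct.congr Q.aut Hb.aut).symm.toLinearMap ∘ₗ Q.coact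
  have hco : ∀ n, TensorProduct.map Q.aut.toLinearMap Hb.aut.toLinearMap (co n) = Q.coact n :=
    fun n => (TensorProduct.congr Q.aut Hb.aut).apply_symm_apply (Q.coact n)
  have hco' : TensorProduct.map Q.aut.toLinearMap Hb.aut.toLinearMap ∘ₗ co = Q.coact :=
    LinearMap.ext hco
  have hca : co ∘ₗ Q.aut.toLinearMap =
      (TensorProduct.map Q.aut.toLinearMap Hb.aut.toLinearMap) ∘ₗ co := by
    rw [coact_aut_iff]
    intro n
    rw [hco, hco]
    exact Q.coact_aut n
  let P : HomHopfModule Ac N :=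
    { act := Q.act.compr₂ Q.aut.toLinearMap
      aut := Q.aut
      act_act := by
        intro m a b
        simp only [LinearMap.compr₂_apply, LinearEquiv.coe_coe]
        rw [Q.aut_act m a, Ac_mul]
        exact congrArg _ (Q.act_act _ _ _)
      act_one := by
        intro m
        simp only [LinearMap.compr₂_apply, LinearEquiv.coe_coe]
        exact congrArg _ (Q.act_one m)
      aut_act := by
        intro m a
        simp only [LinearMap.compr₂_apply, LinearEquiv.coe_coe]
        rw [Q.aut_act]
        rfl
      coact := co
      coassoc := by
        rw [coassoc_iff Hb.comul Hb.aut Q.aut co Hb.comul_aut hca, hco']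
        intro n
        rw [hco]
        exact Q.coassoc n
      counit := by
        rw [counit_iff Hb.counit Hb.aut Q.aut co Hb.counit_aut]
        intro n
        rw [hco]
        exact Q.counit n
      coact_aut := hca
      compat := by
        rw [compat_iff Hb.mul (toUD Ac).mH Hb.aut Q.aut Ac.aut _ Q.act co Ac.coact (Hb_mul Ac)
          (fun x y => Q.aut_act x y) (fun _ _ => rfl) hca]
        intro n a
        rw [hco, hco]
        exact Q.compat n a }
  exact ⟨P, rfl, fun m a => rfl, fun n => (hco n).symm⟩

theorem LinkH.mem {N : Type} [AddCommGroup N] [Module k N] {P : HomHopfModule Ac N}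
    {Q : HMod (toUD Ac) N} (h : LinkH Ac P Q) (n : N) :
    n ∈ coinvSubmoduleOf Hb.one P.coact P.aut ↔ Q.coact n = n ⊗ₜ (toUD Ac).oH := by
  rw [h.2.2, ← h.1]
  refine Iff.trans ?_ (coinv_iff P.aut P.coact n)
  simp [coinvSubmoduleOf, sub_eq_zero]

theorem LinkH.counit {N : Type} [AddCommGroup N] [Module k N] {P : HomHopfModule Ac N}
    {Q : HMod (toUD Ac) N} (h : LinkH Ac P Q) :
    CounitBijectiveR Ac (coinvA Ac) P ↔
      Q.CounitBij (coinvSubmoduleOf Hb.one P.coact P.aut) := by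
  set Nc := coinvSubmoduleOf Hb.one P.coact P.aut with hNc
  have hc : ∀ y, counitPre Ac P y = Q.aut (Q.counitMap Nc y) := by
    intro y
    induction y with
    | zero => simp
    | add x y hx hy => simp only [map_add, hx, hy]
    | tmul n a => exact h.2.1 n a
  have haut : ∀ n, Q.aut n ∈ Nc ↔ n ∈ Nc := by
    intro n
    rw [hNc, h.mem, h.mem, Q.coact_aut]
    have : Q.aut n ⊗ₜ[k] (toUD Ac).oH =
      TensorProduct.map Q.aut.toLinearMap (toUD Ac).α.toLinearMap (n ⊗ₜ (toUD Ac).oH) := by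
      simp [(toUD Ac).α_one]
    rw [this, (map_inj _ _).eq_iff]
  have hrel : relCoinvR Ac (coinvA Ac) P = Q.relC Nc := by
    unfold relCoinvR HMod.relC
    congr 1
    ext x
    constructor
    · rintro ⟨n, n', n'', a, b, hb, h1, h2, rfl⟩
      rw [← mem_B_iff] at hb
      refine ⟨n'', n', Ac.aut a, Ac.aut b, (toUD Ac).β_B hb, ?_, ?_⟩
      · rw [h1, h2, h.2.1, Q.aut_act]
        exact congrArg (fun e : N ≃ₗ[k] N => Q.act (e n) (Ac.aut b)) h.1.symm
      · rw [Ac_mul]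
    · rintro ⟨n, n', a, b, hb, h1, rfl⟩
      have hb' : Ac.aut.symm b ∈ (toUD Ac).B := (toUD Ac).β_symm_B hb
      refine ⟨⟨Q.aut.symm n, ?_⟩, n', n, Ac.aut.symm a, Ac.aut.symm b,
        (mem_B_iff Ac _).1 hb', ?_, ?_, ?_⟩
      · rw [← haut]; simp
      · rw [h1, h.2.1, Q.aut_act]
        simp [β_eq]
      · exact (congrArg (fun e : N ≃ₗ[k] N => e (Q.aut.symm n)) h.1.symm).symm.trans (by simp) |>.symm
      · rw [Ac_mul]; simp
  have hle : ∀ y ∈ Q.relC Nc, Q.counitMap Nc y = 0 := by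
    have : Q.relC Nc ≤ LinearMap.ker (Q.counitMap Nc) := by
      refine Submodule.span_le.2 ?_
      rintro x ⟨n, n', a, b, hb, h1, rfl⟩
      simp only [SetLike.mem_coe, LinearMap.mem_ker, map_sub, HMod.counitMap_tmul]
      rw [h1, Q.act_act, sub_self]
    exact this
  unfold CounitBijectiveR HMod.CounitBij
  rw [hrel]
  refine and_congr ?_ ?_
  · constructor
    · intro hs n
      obtain ⟨y, hy⟩ := hs (Q.aut n)
      exact ⟨y, Q.aut.injective ((hc y).symm.trans hy)⟩
    · intro hs n
      obtain ⟨y, hy⟩ := hs (Q.aut.symm n)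
      exact ⟨y, by rw [hc, hy]; simp⟩
  · constructor
    · intro he y hy
      rw [← he, LinearMap.mem_ker, hc, hy, map_zero]
    · intro hi
      ext y
      rw [LinearMap.mem_ker, hc, LinearEquiv.map_eq_zero_iff]
      exact ⟨hi y, hle y⟩

theorem main : (FaithfullyFlatLeftOf Ac (coinvA Ac) ∧
      (∀ canMap : ((A ⊗[k] A) ⧸ relSubR Ac.mul Ac.aut (coinvA Ac) Ac.mul Ac.aut) →ₗ[k] A ⊗[k] H,
        canMap ∘ₗ (relSubR Ac.mul Ac.aut (coinvA Ac) Ac.mul Ac.aut).mkQ = canPreLin Ac →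
        Function.Bijective canMap)) ↔
    ((∀ (M : Type) [AddCommGroup M] [Module k M] (S : HomModuleOn Ac (coinvA Ac) M),
        UnitBijectiveR Ac (coinvA Ac) S) ∧
      (∀ (N : Type) [AddCommGroup N] [Module k N] (P : HomHopfModule Ac N),
        CounitBijectiveR Ac (coinvA Ac) P)) := by
  rw [galois_iff]
  constructor
  · rintro ⟨hF, hG⟩
    have hF := FF_of_frozen hF
    refine ⟨?_, ?_⟩
    · intro M _ _ S
      obtain ⟨T, hT⟩ := exists_T Ac S
      exact hT.unit.2 (unit_of_FF hF hG T)
    · intro N _ _ P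
      obtain ⟨Q, hQ⟩ := exists_Q P
      exact hQ.counit.2 (counit_of_FF hF hG Q _ hQ.mem)
  · rintro ⟨hU, hC⟩
    have hU' : ∀ (M : Type) [AddCommGroup M] [Module k M] (T : BMod (toUD Ac) M), T.UnitBij := by
      intro M _ _ T
      obtain ⟨S, hS⟩ := exists_S Ac T
      exact hS.unit.1 (hU M S)
    have hC' : ∀ (N : Type) [AddCommGroup N] [Module k N] (P : HMod (toUD Ac) N),
        ∃ Nc : Submodule k N, (∀ n, n ∈ Nc ↔ P.coact n = n ⊗ₜ (toUD Ac).oH) ∧ P.CounitBij Nc := by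
      intro N _ _ Q
      obtain ⟨P, hP⟩ := exists_P Q
      exact ⟨_, hP.mem, hP.counit.1 (hC N P)⟩
    exact ⟨frozen_of_FF (FF_of_unit_counit hU' hC'), galois_of_counit hC'⟩

end HomDT
end

/-! STATEMENT 7 (Doi–Takeuchi): `A/B` is a faithfully flat Hom-Hopf-Galois extension
iff `(F, G)` is a pair of inverse equivalences. -/
theorem statement7
    (k : Type) [Field k] (H : Type) [AddCommGroup H] [Module k H]
    (Hh : MonoidalHomHopf k H)
    (Sinv : H →ₗ[k] H)
    (hSinv₁ : Sinv ∘ₗ Hh.antipode = LinearMap.id)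
    (hSinv₂ : Hh.antipode ∘ₗ Sinv = LinearMap.id)
    (A : Type) [AddCommGroup A] [Module k A]
    (Ac : HomComoduleAlgebra Hh.toMonoidalHomBialgebra A) :
    -- (1): A is faithfully flat as a left B-Hom-module and can is bijective
    (FaithfullyFlatLeftOf Ac (coinvA Ac) ∧
      (∀ canMap : ((A ⊗[k] A) ⧸ relSubR Ac.mul Ac.aut (coinvA Ac) Ac.mul Ac.aut) →ₗ[k] A ⊗[k] H,
        canMap ∘ₗ (relSubR Ac.mul Ac.aut (coinvA Ac) Ac.mul Ac.aut).mkQ = canPreLin Ac →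
        Function.Bijective canMap)) ↔
    -- (2): the unit and counit of the adjunction (F, G) are bijective
    ((∀ (M : Type) [AddCommGroup M] [Module k M] (S : HomModuleOn Ac (coinvA Ac) M),
        UnitBijectiveR Ac (coinvA Ac) S) ∧
      (∀ (N : Type) [AddCommGroup N] [Module k N] (P : HomHopfModule Ac N),
        CounitBijectiveR Ac (coinvA Ac) P)) := by
  exact HomDT.main
end

section
/- Let (H,α) be a monoidal Hom-Hopf algebra, (A,β) a right (H,α)-Hom-comodule algebra, and (M,μ) a left (H,α)-Hom-comodule with coaction m↦m₍₋₁₎⊗m₍₀₎. Equip A⊗M with the right (H,α)-Hom-comodule structure ρʳ(a⊗m)=(a₍₀₎⊗m₍₀₎)⊗a₍₁₎S(m₍₋₁₎). Then the coinvariants coincide with the cotensor product: (A⊗M)^{coH} = A□_H M; i.e. an element Σa⊗m∈A⊗M satisfies ρʳ(Σa⊗m)=Σ(β⁻¹(a)⊗μ⁻¹(m))⊗1_H if and only if Σ(a₍₀₎⊗a₍₁₎)⊗μ⁻¹(m)=Σ(β⁻¹(a)⊗m₍₋₁₎)⊗m₍₀₎. -/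
open TensorProduct

section Statement8Helpers

variable {k : Type} [Field k] {H : Type} [AddCommGroup H] [Module k H]
  {M : Type} [AddCommGroup M] [Module k M]

/-- Coassociativity solved for `(id ⊗ ρ) ρ`. -/
theorem st8_coassoc (Hb : MonoidalHomBialgebra k H) (Mc : HomLeftComodule Hb M) (m : M) :
    TensorProduct.map LinearMap.id Mc.coact (Mc.coact m) =
      TensorProduct.map Hb.aut.toLinearMap LinearMap.id
        (TensorProduct.assoc k H H M
          (TensorProduct.map Hb.comul Mc.aut.symm.toLinearMap (Mc.coact m))) := by
  have h := LinearMap.congr_fun Mc.coassoc m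
  simp only [LinearMap.comp_apply, LinearEquiv.coe_coe] at h
  rw [h, LinearEquiv.apply_symm_apply]
  induction Mc.coact m using TensorProduct.induction_on with
  | zero => simp
  | add x y hx hy => simp only [map_add, hx, hy]
  | tmul g n => simp

/-- `g ⊗ (h ⊗ m) ↦ μ m ⊗ g · α (S h)`. -/
noncomputable def st8P (Hh : MonoidalHomHopf k H)
    (Mc : HomLeftComodule Hh.toMonoidalHomBialgebra M) : H ⊗[k] (H ⊗[k] M) →ₗ[k] M ⊗[k] H :=
  (TensorProduct.comm k H M).toLinearMap ∘ₗ
    TensorProduct.map (TensorProduct.lift Hh.mul) LinearMap.id ∘ₗ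
      (TensorProduct.assoc k H H M).symm.toLinearMap ∘ₗ
        TensorProduct.map LinearMap.id
          (TensorProduct.map (Hh.aut.toLinearMap ∘ₗ Hh.antipode) Mc.aut.toLinearMap)

theorem st8P_tmul (Hh : MonoidalHomHopf k H)
    (Mc : HomLeftComodule Hh.toMonoidalHomBialgebra M) (g h : H) (m : M) :
    st8P Hh Mc (g ⊗ₜ (h ⊗ₜ m)) = Mc.aut m ⊗ₜ Hh.mul g (Hh.aut (Hh.antipode h)) := by
  simp [st8P]

/-- `g ⊗ (h ⊗ m) ↦ α⁻² (c · S g) · h ⊗ μ m`. -/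
noncomputable def st8Q (Hh : MonoidalHomHopf k H)
    (Mc : HomLeftComodule Hh.toMonoidalHomBialgebra M) (c : H) :
    H ⊗[k] (H ⊗[k] M) →ₗ[k] H ⊗[k] M :=
  TensorProduct.map (TensorProduct.lift Hh.mul) Mc.aut.toLinearMap ∘ₗ
    (TensorProduct.assoc k H H M).symm.toLinearMap ∘ₗ
      TensorProduct.map (Hh.aut.symm.toLinearMap ∘ₗ Hh.aut.symm.toLinearMap ∘ₗ
        Hh.mul c ∘ₗ Hh.antipode) LinearMap.id

theorem st8Q_tmul (Hh : MonoidalHomHopf k H)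
    (Mc : HomLeftComodule Hh.toMonoidalHomBialgebra M) (c g h : H) (m : M) :
    st8Q Hh Mc c (g ⊗ₜ (h ⊗ₜ m)) =
      Hh.mul (Hh.aut.symm (Hh.aut.symm (Hh.mul c (Hh.antipode g)))) h ⊗ₜ Mc.aut m := by
  simp [st8Q]

theorem st8_S_aut (Hh : MonoidalHomHopf k H) (g : H) :
    Hh.antipode (Hh.aut g) = Hh.aut (Hh.antipode g) :=
  LinearMap.congr_fun Hh.antipode_aut g

theorem st8_counit (Hb : MonoidalHomBialgebra k H) (Mc : HomLeftComodule Hb M) (m : M) :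
    TensorProduct.lid k M (TensorProduct.map Hb.counit LinearMap.id (Mc.coact m)) =
      Mc.aut.symm m :=
  LinearMap.congr_fun Mc.counit m

theorem st8P_coact (Hh : MonoidalHomHopf k H)
    (Mc : HomLeftComodule Hh.toMonoidalHomBialgebra M) (m : M) :
    st8P Hh Mc (TensorProduct.map LinearMap.id Mc.coact (Mc.coact m)) =
      Mc.aut.symm m ⊗ₜ Hh.one := by
  rw [st8_coassoc, ← st8_counit]
  induction Mc.coact m using TensorProduct.induction_on with
  | zero => simp
  | add x y hx hy => simp only [map_add, TensorProduct.add_tmul, hx, hy]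
  | tmul g n =>
    have h := LinearMap.congr_fun Hh.antipode_mul_right g
    simp only [LinearMap.comp_apply, LinearMap.toSpanSingleton_apply] at h
    have key : ∀ w : H ⊗[k] H,
        st8P Hh Mc (TensorProduct.map Hh.aut.toLinearMap LinearMap.id
          (TensorProduct.assoc k H H M (w ⊗ₜ Mc.aut.symm n))) =
        n ⊗ₜ Hh.aut (TensorProduct.lift Hh.mul (TensorProduct.map LinearMap.id Hh.antipode w)) := by
      intro w
      induction w using TensorProduct.induction_on with
      | zero => simp
      | add x y hx hy => simp only [map_add, TensorProduct.add_tmul, TensorProduct.tmul_add, hx, hy]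
      | tmul a b => simp [st8P_tmul, Hh.aut_mul]
    simp only [TensorProduct.map_tmul, LinearEquiv.coe_coe, key, h, TensorProduct.lid_tmul,
      map_smul, Hh.aut_one, LinearMap.id_apply, TensorProduct.smul_tmul]

theorem st8Q_coact (Hh : MonoidalHomHopf k H)
    (Mc : HomLeftComodule Hh.toMonoidalHomBialgebra M) (c : H) (m : M) :
    st8Q Hh Mc c (TensorProduct.map LinearMap.id Mc.coact (Mc.coact m)) =
      c ⊗ₜ Mc.aut.symm m := by
  rw [st8_coassoc, ← st8_counit]
  induction Mc.coact m using TensorProduct.induction_on with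
  | zero => simp
  | add x y hx hy => simp only [map_add, TensorProduct.tmul_add, hx, hy]
  | tmul g n =>
    have h := LinearMap.congr_fun Hh.antipode_mul_left g
    simp only [LinearMap.comp_apply, LinearMap.toSpanSingleton_apply] at h
    have key : ∀ w : H ⊗[k] H,
        st8Q Hh Mc c (TensorProduct.map Hh.aut.toLinearMap LinearMap.id
          (TensorProduct.assoc k H H M (w ⊗ₜ Mc.aut.symm n))) =
        Hh.aut.symm (Hh.aut.symm (Hh.mul (Hh.aut c) (Hh.aut
          (TensorProduct.lift Hh.mul (TensorProduct.map Hh.antipode LinearMap.id w))))) ⊗ₜ n := by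
      intro w
      induction w using TensorProduct.induction_on with
      | zero => simp
      | add x y hx hy => simp only [map_add, TensorProduct.add_tmul, hx, hy]
      | tmul a b =>
        simp only [TensorProduct.assoc_tmul, TensorProduct.map_tmul, LinearEquiv.coe_coe,
          st8Q_tmul, LinearMap.id_apply, LinearEquiv.apply_symm_apply, TensorProduct.lift.tmul]
        congr 1
        apply Hh.aut.injective
        apply Hh.aut.injective
        simp only [Hh.aut_mul, LinearEquiv.apply_symm_apply, Hh.hom_assoc, st8_S_aut]
    simp only [TensorProduct.map_tmul, LinearEquiv.coe_coe, key, h, TensorProduct.lid_tmul,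
      map_smul, Hh.aut_one, LinearMap.id_apply, Hh.mulOne, LinearEquiv.symm_apply_apply,
      TensorProduct.smul_tmul]

theorem st8_coact_symm (Hb : MonoidalHomBialgebra k H) (Mc : HomLeftComodule Hb M) (m : M) :
    Mc.coact m =
      TensorProduct.map Hb.aut.toLinearMap Mc.aut.toLinearMap (Mc.coact (Mc.aut.symm m)) := by
  have h := LinearMap.congr_fun Mc.coact_aut (Mc.aut.symm m)
  simpa using h

end Statement8Helpers

/-! STATEMENT 8: For a left Hom-comodule `M`, with the right coaction
`ρʳ(a⊗m)=(a₍₀₎⊗m₍₀₎)⊗a₍₁₎S(m₍₋₁₎)` on `A ⊗ M`, the coinvariants coincide with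
the cotensor product `A □_H M`. -/
theorem statement8
    (k : Type) [Field k] (H : Type) [AddCommGroup H] [Module k H]
    (Hh : MonoidalHomHopf k H)
    (A : Type) [AddCommGroup A] [Module k A]
    (Ac : HomComoduleAlgebra Hh.toMonoidalHomBialgebra A)
    (M : Type) [AddCommGroup M] [Module k M]
    (Mc : HomLeftComodule Hh.toMonoidalHomBialgebra M)
    (ρr : A ⊗[k] M →ₗ[k] (A ⊗[k] M) ⊗[k] H)
    -- ρʳ(a⊗m) = (a₍₀₎ ⊗ m₍₀₎) ⊗ a₍₁₎ · S(m₍₋₁₎)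
    (hρr : ρr =
      (TensorProduct.map LinearMap.id (TensorProduct.lift Hh.mul)) ∘ₗ
        (TensorProduct.tensorTensorTensorComm k A H M H).toLinearMap ∘ₗ
          (TensorProduct.map Ac.coact
            ((TensorProduct.map LinearMap.id Hh.antipode) ∘ₗ
              (TensorProduct.comm k H M).toLinearMap ∘ₗ Mc.coact))) :
    {t : A ⊗[k] M |
        ρr t = ((TensorProduct.map Ac.aut.symm.toLinearMap Mc.aut.symm.toLinearMap) t) ⊗ₜ[k] Hh.one}
      = (cotensorSub Ac.coact Ac.aut Mc.coact Mc.aut : Set (A ⊗[k] M)) := by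
  set B := TensorProduct.lift Hh.mul with hB
  -- the map `(x ⊗ h) ⊗ m ↦ (x ⊗ μ m₀) ⊗ h · α (S m₋₁)`
  let Φ : (A ⊗[k] H) ⊗[k] M →ₗ[k] (A ⊗[k] M) ⊗[k] H :=
    TensorProduct.map LinearMap.id B ∘ₗ
      (TensorProduct.tensorTensorTensorComm k A H M H).toLinearMap ∘ₗ
        TensorProduct.map LinearMap.id
          (TensorProduct.map Mc.aut.toLinearMap (Hh.aut.toLinearMap ∘ₗ Hh.antipode) ∘ₗ
            (TensorProduct.comm k H M).toLinearMap ∘ₗ Mc.coact)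
  -- the map `(x ⊗ m) ⊗ h ↦ (x ⊗ α⁻² h · m₋₁) ⊗ μ m₀`
  let K : M ⊗[k] H →ₗ[k] H ⊗[k] M :=
    TensorProduct.map B Mc.aut.toLinearMap ∘ₗ
      (TensorProduct.assoc k H H M).symm.toLinearMap ∘ₗ
        TensorProduct.map (Hh.aut.symm.toLinearMap ∘ₗ Hh.aut.symm.toLinearMap) Mc.coact ∘ₗ
          (TensorProduct.comm k M H).toLinearMap
  let Ψ : (A ⊗[k] M) ⊗[k] H →ₗ[k] (A ⊗[k] H) ⊗[k] M :=
    (TensorProduct.assoc k A H M).symm.toLinearMap ∘ₗ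
      TensorProduct.map LinearMap.id K ∘ₗ (TensorProduct.assoc k A M H).toLinearMap
  let L : A ⊗[k] M →ₗ[k] (A ⊗[k] H) ⊗[k] M :=
    TensorProduct.map Ac.coact Mc.aut.symm.toLinearMap
  let R : A ⊗[k] M →ₗ[k] (A ⊗[k] H) ⊗[k] M :=
    (TensorProduct.assoc k A H M).symm.toLinearMap ∘ₗ
        TensorProduct.map Ac.aut.symm.toLinearMap Mc.coact
  let R' : A ⊗[k] M →ₗ[k] (A ⊗[k] M) ⊗[k] H :=
    (TensorProduct.mk k (A ⊗[k] M) H).flip Hh.one ∘ₗ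
      TensorProduct.map Ac.aut.symm.toLinearMap Mc.aut.symm.toLinearMap
  have h1 : Φ ∘ₗ L = ρr := by
    rw [hρr]
    apply TensorProduct.ext'
    intro a m
    simp only [Φ, L, LinearMap.comp_apply, TensorProduct.map_tmul, LinearEquiv.coe_coe,
      LinearMap.id_apply]
    congr 3
    rw [st8_coact_symm _ Mc m]
    induction Mc.coact (Mc.aut.symm m) using TensorProduct.induction_on with
    | zero => simp
    | add x y hx hy => simp only [map_add, hx, hy]
    | tmul g n => simp [st8_S_aut]
  have h2 : Φ ∘ₗ R = R' := by
    apply TensorProduct.ext'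
    intro a m
    have key : ∀ (x : A) (v : H ⊗[k] M),
        Φ ((TensorProduct.assoc k A H M).symm (x ⊗ₜ v)) =
          (TensorProduct.assoc k A M H).symm
            (x ⊗ₜ st8P Hh Mc (TensorProduct.map LinearMap.id Mc.coact v)) := by
      intro x v
      induction v using TensorProduct.induction_on with
      | zero => simp
      | add x y hx hy => simp only [map_add, TensorProduct.tmul_add, hx, hy]
      | tmul g n =>
        simp only [Φ, LinearMap.comp_apply, TensorProduct.map_tmul, LinearEquiv.coe_coe,
          LinearMap.id_apply, TensorProduct.assoc_symm_tmul]
        induction Mc.coact n using TensorProduct.induction_on with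
        | zero => simp
        | add x y hx hy => simp only [map_add, TensorProduct.tmul_add, hx, hy]
        | tmul h p => simp [st8P_tmul, hB]
    simp only [R, R', LinearMap.comp_apply, TensorProduct.map_tmul, LinearEquiv.coe_coe, key,
      st8P_coact, TensorProduct.assoc_symm_tmul, LinearMap.flip_apply, TensorProduct.mk_apply]
  have h3 : Ψ ∘ₗ ρr = L := by
    rw [hρr]
    apply TensorProduct.ext'
    intro a m
    simp only [L, LinearMap.comp_apply, TensorProduct.map_tmul, LinearEquiv.coe_coe]
    induction Ac.coact a using TensorProduct.induction_on with
    | zero => simp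
    | add x y hx hy => simp only [map_add, TensorProduct.add_tmul, hx, hy]
    | tmul x c =>
      rw [← TensorProduct.assoc_symm_tmul x c (Mc.aut.symm m), ← st8Q_coact Hh Mc c m]
      induction Mc.coact m using TensorProduct.induction_on with
      | zero => simp
      | add x y hx hy => simp only [map_add, TensorProduct.tmul_add, hx, hy]
      | tmul g n =>
        simp [Ψ, K, st8Q, hB]
  have h4 : Ψ ∘ₗ R' = R := by
    apply TensorProduct.ext'
    intro a m
    simp only [Ψ, K, R, R', LinearMap.comp_apply, TensorProduct.map_tmul, LinearEquiv.coe_coe,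
      LinearMap.flip_apply, TensorProduct.mk_apply, TensorProduct.assoc_tmul, LinearMap.id_apply,
      TensorProduct.comm_tmul]
    congr 2
    rw [st8_coact_symm _ Mc m]
    have e : Hh.aut.symm Hh.one = Hh.one := by
      rw [LinearEquiv.symm_apply_eq, Hh.aut_one]
    rw [e, e]
    induction Mc.coact (Mc.aut.symm m) using TensorProduct.induction_on with
    | zero => simp
    | add x y hx hy => simp only [map_add, TensorProduct.tmul_add, hx, hy]
    | tmul g n => simp [hB, Hh.oneMul]
  ext t
  have hc : t ∈ (cotensorSub Ac.coact Ac.aut Mc.coact Mc.aut : Set (A ⊗[k] M)) ↔ L t = R t := by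
    simp only [cotensorSub, SetLike.mem_coe, LinearMap.mem_ker, LinearMap.sub_apply, sub_eq_zero]
    rfl
  rw [hc]
  change ρr t = R' t ↔ L t = R t
  constructor
  · intro h
    rw [← h3, ← h4]
    exact congrArg Ψ h
  · intro h
    rw [← h1, ← h2]
    exact congrArg Φ h
end
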